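/- Assume m > n. Then there exist complex numbers a_{i,s} (for each integer i with 1 ≤ i ≤ 2N−1, i ≠ N, and each s = 0,…,m+n) with a_{i,0} = 1 such that the polynomials q¹ᵢ = ∑_{s=0}^{m+n} a_{i,s}·z^{(m+n−s)N+i}·w^{Ns} and q²ᵢ = ∑_{s=0}^{m+n} \overline{a_{i,s}}·w^{(m+n−s)N+i}·z^{Ns} are quasi-invariant, and such that the 2N+2 polynomials q⁰ = 1, q¹ = (z^N+w^N)^{2n+1}, q² = (z^N−w^N)^{2m+1}, q³ = q¹·q², together with q¹ᵢ and q²ᵢ for 1 ≤ i ≤ 2N−1, i ≠ N, form a free basis of the module of quasi-invariants over S: every quasi-invariant p ∈ R can be written in exactly one way as p = s₀·q⁰ + s₁·q¹ + s₂·q² + s₃·q³ + ∑ᵢ (s¹ᵢ·q¹ᵢ + s²ᵢ·q²ᵢ) with all coefficients s₀, s₁, s₂, s₃, s¹ᵢ, s²ᵢ in S. -/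

import Mathlib

open MvPolynomial Finset

noncomputable section

/-- The polynomial ring `R = ℂ[z,w]`. -/
abbrev R2 : Type := MvPolynomial (Fin 2) ℂ

/-- `z`, the first variable. -/
def zP : R2 := X 0

/-- `w`, the second variable (playing the role of `z̄`). -/
def wP : R2 := X 1

/-- `ε = exp(πi/N)`, a primitive `2N`-th root of unity. -/
def eps (N : ℕ) : ℂ := Complex.exp ((Real.pi : ℂ) * Complex.I / (N : ℂ))

/-- The reflection `σⱼ : z ↦ ε^j w, w ↦ ε^{-j} z` as a `ℂ`-algebra endomorphism. -/
def dihRefl (N j : ℕ) : R2 →ₐ[ℂ] R2 :=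
  aeval (fun k : Fin 2 => if k = 0 then C (eps N ^ j) * X 1 else C (eps N ^ (-(j : ℤ))) * X 0)

/-- The multiplicity `mⱼ`: `m` for even `j`, `n` for odd `j`. -/
def mult (m n j : ℕ) : ℕ := if Even j then m else n

/-- Quasi-invariance for the dihedral system `I₂(2N)` with multiplicities `(m,n)`. -/
def IsQuasiInv (N m n : ℕ) (p : R2) : Prop :=
  ∀ j < 2 * N, (zP - C (eps N ^ j) * wP) ^ (2 * mult m n j + 1) ∣ dihRefl N j p - p

/-- The algebra `S` of invariants of `I₂(2N)`, generated by `z·w` and `z^{2N}+w^{2N}`. -/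
def Sinv (N : ℕ) : Subalgebra ℂ R2 :=
  Algebra.adjoin ℂ {zP * wP, zP ^ (2 * N) + wP ^ (2 * N)}

/-- The index set `{1,…,2N−1} \ {N}`. -/
def idxSet (N : ℕ) : Finset ℕ :=
  (Finset.range (2 * N)).filter (fun i => 1 ≤ i ∧ i ≠ N)

/-- `q¹ᵢ` built from a coefficient vector `a`. -/
def q1i (N m n i : ℕ) (a : ℕ → ℂ) : R2 :=
  ∑ s ∈ Finset.range (m + n + 1), C (a s) * zP ^ ((m + n - s) * N + i) * wP ^ (N * s)

/-- `q²ᵢ` built from a coefficient vector `a` (conjugate coefficients, variables swapped). -/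
def q2i (N m n i : ℕ) (a : ℕ → ℂ) : R2 :=
  ∑ s ∈ Finset.range (m + n + 1),
    C (starRingEnd ℂ (a s)) * wP ^ ((m + n - s) * N + i) * zP ^ (N * s)

/-!
The rotation `z ↦ ε z`, `w ↦ ε⁻¹ w` preserves the quasi-invariants, which therefore split into the
direct sum of their `2N` weight spaces, and each of these is free of rank two. Indeed, if `f` and
`g` are quasi-invariants of the same weight, then `f σ(g) - g σ(f)`, where `σ` interchanges `z` and
`w`, is divisible by the product `(z^N + w^N)^(2n+1) (z^N - w^N)^(2m+1)`. If the quotient is a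
nonzero constant, then Cramer's rule expresses every quasi-invariant of this weight uniquely through
`f` and `g` with invariant coefficients.

In the weights `1` and `-1` such pairs are `1`, `q³` and `q¹`, `q²`. In the other weights a pair
consists of `q¹ᵢ` and `q²ⱼ` with `i + j = 2N`: the degree of its determinant is that of the product
above, and its value at `(1, 0)` does not vanish. The polynomials `q¹ᵢ` arise from `z^i` by shift
operators `p ↦ δ E p - κ p`, with `E = z ∂/∂z - w ∂/∂w`, which raise the multiplicities by one. On
forms of degree `d` such an operator multiplies the value at `(1, 0)` by `d - N r` for an integer
`r`, and this is nonzero because `d ≡ i` is not divisible by `N`.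
-/

section Substitutions

/-- The rotation `z ↦ u z`, `w ↦ u⁻¹ w`. -/
def rotVars (u : ℂ) : R2 →ₐ[ℂ] R2 := aeval ![C u * zP, C u⁻¹ * wP]

/-- The reflection `z ↔ w`. -/
def swapVars : R2 →ₐ[ℂ] R2 := rename (Equiv.swap 0 1)

/-- The reflection `z ↦ u w`, `w ↦ u⁻¹ z` in the mirror `z = u w`. -/
def reflVars (u : ℂ) : R2 →ₐ[ℂ] R2 := swapVars.comp (rotVars u)

/-- The linear form `z - u w` cutting out the mirror `z = u w`. -/
def mirror (u : ℂ) : R2 := zP - C u * wP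

variable {u v : ℂ}

theorem ringHom_ext_zw {A : Type*} [CommSemiring A] {f g : R2 →+* A}
    (hC : ∀ c, f (C c) = g (C c)) (hz : f zP = g zP) (hw : f wP = g wP) : f = g :=
  MvPolynomial.ringHom_ext hC (Fin.forall_fin_two.mpr ⟨hz, hw⟩)

theorem algHom_ext_zw {A : Type*} [CommSemiring A] [Algebra ℂ A] {f g : R2 →ₐ[ℂ] A}
    (hz : f zP = g zP) (hw : f wP = g wP) : f = g :=
  MvPolynomial.algHom_ext (Fin.forall_fin_two.mpr ⟨hz, hw⟩)

theorem monomial_eq_C_mul_zP_pow_mul_wP_pow (d : Fin 2 →₀ ℕ) (c : ℂ) :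
    (monomial d c : R2) = C c * (zP ^ d 0 * wP ^ d 1) := by
  rw [monomial_eq, Finsupp.prod_fintype _ _ (by simp), Fin.prod_univ_two, zP, wP]

theorem isUnit_C {σ K : Type*} [Field K] {c : K} (hc : c ≠ 0) : IsUnit (C c : MvPolynomial σ K) :=
  hc.isUnit.map C

@[simp] theorem algHom_C (f : R2 →ₐ[ℂ] R2) (c : ℂ) : f (C c) = C c := f.commutes c

@[simp] theorem rotVars_zP (u : ℂ) : rotVars u zP = C u * zP := by
  rw [rotVars, zP, aeval_X]; rfl

@[simp] theorem rotVars_wP (u : ℂ) : rotVars u wP = C u⁻¹ * wP := by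
  rw [rotVars, wP, aeval_X]; rfl

@[simp] theorem swapVars_zP : swapVars zP = wP := by simp [swapVars, zP, wP]

@[simp] theorem swapVars_wP : swapVars wP = zP := by simp [swapVars, zP, wP]

@[simp] theorem swapVars_swapVars (p : R2) : swapVars (swapVars p) = p := by
  have h : swapVars.comp swapVars = AlgHom.id ℂ R2 := algHom_ext_zw (by simp) (by simp)
  exact DFunLike.congr_fun h p

theorem reflVars_apply (u : ℂ) (p : R2) : reflVars u p = swapVars (rotVars u p) := rfl

@[simp] theorem reflVars_zP (u : ℂ) : reflVars u zP = C u * wP := by simp [reflVars_apply]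

@[simp] theorem reflVars_wP (u : ℂ) : reflVars u wP = C u⁻¹ * zP := by simp [reflVars_apply]

theorem rotVars_one : rotVars 1 = AlgHom.id ℂ R2 := algHom_ext_zw (by simp) (by simp)

theorem rotVars_comp (u v : ℂ) : (rotVars u).comp (rotVars v) = rotVars (u * v) :=
  algHom_ext_zw (by simp [mul_comm, mul_left_comm])
    (by simp [mul_comm, mul_left_comm])

theorem rotVars_rotVars (u v : ℂ) (p : R2) : rotVars u (rotVars v p) = rotVars (u * v) p :=
  DFunLike.congr_fun (rotVars_comp u v) p

theorem rotVars_pow (u : ℂ) (t : ℕ) :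
    (rotVars u).toLinearMap ^ t = (rotVars (u ^ t)).toLinearMap := by
  induction t with
  | zero => rw [pow_zero, pow_zero, rotVars_one]; rfl
  | succ t ih =>
    rw [pow_succ, ih, pow_succ, ← rotVars_comp]; rfl

theorem rotVars_inv_apply (hu : u ≠ 0) (p : R2) : rotVars u⁻¹ (rotVars u p) = p := by
  rw [rotVars_rotVars, inv_mul_cancel₀ hu, rotVars_one, AlgHom.id_apply]

theorem rotVars_swapVars (u : ℂ) (p : R2) :
    rotVars u (swapVars p) = swapVars (rotVars u⁻¹ p) := by
  have h : (rotVars u).comp swapVars = swapVars.comp (rotVars u⁻¹) :=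
    algHom_ext_zw (by simp) (by simp)
  exact DFunLike.congr_fun h p

theorem rotVars_reflVars (hv : v ≠ 0) (u : ℂ) (p : R2) :
    rotVars v (reflVars (u * v ^ 2) p) = reflVars u (rotVars v p) := by
  have h : v⁻¹ * (u * v ^ 2) = u * v := by field_simp
  rw [reflVars_apply, reflVars_apply, rotVars_swapVars, rotVars_rotVars, rotVars_rotVars, h]

theorem reflVars_reflVars (hu : u ≠ 0) (p : R2) : reflVars u (reflVars u p) = p := by
  rw [reflVars_apply, reflVars_apply, rotVars_swapVars, rotVars_inv_apply hu, swapVars_swapVars]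

theorem mirror_ne_zero (u : ℂ) : mirror u ≠ 0 := by
  intro h
  have := congrArg (MvPolynomial.eval ![1, 0]) h
  simp [mirror, zP, wP] at this

theorem reflVars_mirror (hu : u ≠ 0) : reflVars u (mirror u) = -mirror u := by
  simp only [mirror, map_sub, map_mul, algHom_C, reflVars_zP, reflVars_wP]
  rw [← mul_assoc, ← C_mul, mul_inv_cancel₀ hu, C_1]
  ring

end Substitutions

section QuasiInvariants

variable {N m n k : ℕ} {u v : ℂ} {p : R2}

/-- The polynomials satisfying the quasi-invariance condition of multiplicity `k` at the single
mirror `z = u w`. -/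
def quasiInvariantsAt (u : ℂ) (k : ℕ) : Subalgebra ℂ R2 where
  carrier := {p | mirror u ^ (2 * k + 1) ∣ reflVars u p - p}
  algebraMap_mem' c := by simp [algebraMap_eq]
  add_mem' {p q} hp hq := by
    have h : reflVars u (p + q) - (p + q) = (reflVars u p - p) + (reflVars u q - q) := by
      rw [map_add]; ring
    rw [Set.mem_ofPred_eq, h]
    exact dvd_add hp hq
  mul_mem' {p q} hp hq := by
    have h : reflVars u (p * q) - p * q
        = reflVars u p * (reflVars u q - q) + q * (reflVars u p - p) := by
      rw [map_mul]; ring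
    rw [Set.mem_ofPred_eq, h]
    exact dvd_add (hq.mul_left _) (hp.mul_left _)

theorem mem_quasiInvariantsAt :
    p ∈ quasiInvariantsAt u k ↔ mirror u ^ (2 * k + 1) ∣ reflVars u p - p := Iff.rfl

theorem mem_quasiInvariantsAt_of_reflVars_eq (h : reflVars u p = p) :
    p ∈ quasiInvariantsAt u k := by
  rw [mem_quasiInvariantsAt, h, sub_self]
  exact dvd_zero _

theorem quasiInvariantsAt_zero (hu : u ≠ 0) : quasiInvariantsAt u 0 = ⊤ := by
  refine top_le_iff.mp (adjoin_range_X.symm.trans_le (Algebra.adjoin_le ?_))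
  rintro _ ⟨i, rfl⟩
  revert i
  refine Fin.forall_fin_two.mpr ⟨?_, ?_⟩ <;>
    simp only [SetLike.mem_coe, mem_quasiInvariantsAt, mul_zero, zero_add, pow_one]
  · exact ⟨-1, by change reflVars u zP - zP = _; rw [reflVars_zP, mirror]; ring⟩
  · refine ⟨C u⁻¹, ?_⟩
    change reflVars u wP - wP = _
    have h : (C u * C u⁻¹ : R2) = 1 := by rw [← C_mul, mul_inv_cancel₀ hu, C_1]
    rw [reflVars_wP, mirror]
    linear_combination wP * h

theorem map_mem_quasiInvariantsAt {φ : R2 →+* R2}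
    (hσ : ∀ p, φ (reflVars v p) = reflVars u (φ p)) (hφ : mirror u ∣ φ (mirror v))
    (hp : p ∈ quasiInvariantsAt v k) : φ p ∈ quasiInvariantsAt u k := by
  rw [mem_quasiInvariantsAt, ← hσ, ← map_sub]
  exact (pow_dvd_pow_of_dvd hφ _).trans (map_pow φ _ _ ▸ map_dvd φ hp)

/-- The quasi-invariants of `I₂(2N)`. The conditions at the mirrors `z = u w` are sorted by the
value `u ^ N = ±1`, which distinguishes the two orbits of mirrors. -/
def quasiInvariants (N m n : ℕ) : Subalgebra ℂ R2 :=
  (⨅ (u : ℂ) (_ : u ^ N = 1), quasiInvariantsAt u m) ⊓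
    ⨅ (u : ℂ) (_ : u ^ N = -1), quasiInvariantsAt u n

theorem mem_quasiInvariants :
    p ∈ quasiInvariants N m n ↔ (∀ u : ℂ, u ^ N = 1 → p ∈ quasiInvariantsAt u m) ∧
      ∀ u : ℂ, u ^ N = -1 → p ∈ quasiInvariantsAt u n := by
  simp only [quasiInvariants, Algebra.mem_inf, Algebra.mem_iInf]

theorem ne_zero_of_pow_eq_one (hN : 1 ≤ N) (hu : u ^ N = 1) : u ≠ 0 :=
  (pow_ne_zero_iff (by omega)).mp (hu ▸ one_ne_zero)

theorem ne_zero_of_pow_eq_neg_one (hN : 1 ≤ N) (hu : u ^ N = -1) : u ≠ 0 :=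
  (pow_ne_zero_iff (by omega)).mp (hu ▸ neg_ne_zero.mpr one_ne_zero)

theorem mem_quasiInvariants_zero_left (hN : 1 ≤ N) :
    p ∈ quasiInvariants N 0 n ↔ ∀ u : ℂ, u ^ N = -1 → p ∈ quasiInvariantsAt u n :=
  mem_quasiInvariants.trans <| and_iff_right fun _ hu =>
    quasiInvariantsAt_zero (ne_zero_of_pow_eq_one hN hu) ▸ Algebra.mem_top

theorem mem_quasiInvariants_zero_right (hN : 1 ≤ N) :
    p ∈ quasiInvariants N m 0 ↔ ∀ u : ℂ, u ^ N = 1 → p ∈ quasiInvariantsAt u m :=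
  mem_quasiInvariants.trans <| and_iff_left fun _ hu =>
    quasiInvariantsAt_zero (ne_zero_of_pow_eq_neg_one hN hu) ▸ Algebra.mem_top

theorem eps_ne_zero (N : ℕ) : eps N ≠ 0 := Complex.exp_ne_zero _

theorem isPrimitiveRoot_eps (hN : 1 ≤ N) : IsPrimitiveRoot (eps N) (2 * N) := by
  have hN0 : (N : ℂ) ≠ 0 := by exact_mod_cast (by omega : N ≠ 0)
  have h : eps N = Complex.exp (2 * Real.pi * Complex.I / ((2 * N : ℕ) : ℂ)) := by
    rw [eps]
    congr 1
    push_cast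
    field_simp
  exact h ▸ Complex.isPrimitiveRoot_exp (2 * N) (by omega)

theorem eps_pow_self (hN : 1 ≤ N) : eps N ^ N = -1 := by
  have h : (N : ℂ) ≠ 0 := by exact_mod_cast (by omega : N ≠ 0)
  rw [eps, ← Complex.exp_nat_mul, mul_div_cancel₀ _ h, Complex.exp_pi_mul_I]

theorem exists_eps_pow_eq (hN : 1 ≤ N) (hu : u ^ (2 * N) = 1) : ∃ j < 2 * N, eps N ^ j = u :=
  have : NeZero (2 * N) := ⟨by omega⟩
  (isPrimitiveRoot_eps hN).eq_pow_of_pow_eq_one hu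

theorem pow_two_mul_eq_one (hu : u ^ N = 1 ∨ u ^ N = -1) : u ^ (2 * N) = 1 := by
  rw [mul_comm, pow_mul]
  rcases hu with hu | hu <;> simp [hu]

theorem dihRefl_eq_reflVars (N j : ℕ) : dihRefl N j = reflVars (eps N ^ j) := by
  refine algHom_ext_zw ?_ ?_
  · rw [reflVars_zP, dihRefl, zP, aeval_X, if_pos rfl, wP]
  · rw [reflVars_wP, dihRefl, wP, aeval_X, if_neg one_ne_zero, zP, zpow_neg, zpow_natCast]

theorem isQuasiInv_iff_forall_lt : IsQuasiInv N m n p ↔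
    ∀ j < 2 * N, p ∈ quasiInvariantsAt (eps N ^ j) (mult m n j) := by
  simp only [IsQuasiInv, mem_quasiInvariantsAt, dihRefl_eq_reflVars, mirror]

theorem isQuasiInv_iff (hN : 1 ≤ N) : IsQuasiInv N m n p ↔ p ∈ quasiInvariants N m n := by
  have heps (j : ℕ) : (eps N ^ j) ^ N = (-1) ^ j := by
    rw [← pow_mul, mul_comm, pow_mul, eps_pow_self hN]
  have hne : (-1 : ℂ) ≠ 1 := by norm_num
  rw [isQuasiInv_iff_forall_lt, mem_quasiInvariants]
  constructor
  · refine fun h => ⟨fun u hu => ?_, fun u hu => ?_⟩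
    · obtain ⟨j, hj, rfl⟩ := exists_eps_pow_eq hN (pow_two_mul_eq_one (.inl hu))
      have hj' : Even j := by
        by_contra hodd
        exact hne (((heps j).trans (Nat.not_even_iff_odd.mp hodd).neg_one_pow).symm.trans hu)
      simpa only [mult, if_pos hj'] using h j hj
    · obtain ⟨j, hj, rfl⟩ := exists_eps_pow_eq hN (pow_two_mul_eq_one (.inr hu))
      have hj' : ¬Even j := fun heven => hne (hu.symm.trans ((heps j).trans heven.neg_one_pow))
      simpa only [mult, if_neg hj'] using h j hj
  · rintro ⟨h₁, h₂⟩ j -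
    by_cases hj : Even j
    · simpa only [mult, if_pos hj] using h₁ _ (by rw [heps, hj.neg_one_pow])
    · simpa only [mult, if_neg hj] using
        h₂ _ (by rw [heps, (Nat.not_even_iff_odd.mp hj).neg_one_pow])

theorem rotVars_mem_quasiInvariants (hN : 1 ≤ N) (hv : v ^ (2 * N) = 1)
    (hp : p ∈ quasiInvariants N m n) : rotVars v p ∈ quasiInvariants N m n := by
  have hv0 : v ≠ 0 := ne_zero_of_pow_eq_one (by omega) hv
  have hpow (u : ℂ) : (u * v ^ 2) ^ N = u ^ N := by rw [mul_pow, ← pow_mul, hv, mul_one]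
  have hmirror (u : ℂ) : mirror u ∣ rotVars v (mirror (u * v ^ 2)) := by
    refine ⟨C v, ?_⟩
    have h : (C v * C v⁻¹ : R2) = 1 := by rw [← C_mul, mul_inv_cancel₀ hv0, C_1]
    simp only [mirror, map_sub, map_mul, algHom_C, rotVars_zP, rotVars_wP]
    rw [C_pow]
    linear_combination -C u * C v * wP * h
  rw [mem_quasiInvariants] at hp ⊢
  exact ⟨fun u hu => map_mem_quasiInvariantsAt (φ := (rotVars v : R2 →+* R2))
      (rotVars_reflVars hv0 u) (hmirror u) (hp.1 _ (by rw [hpow, hu])),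
    fun u hu => map_mem_quasiInvariantsAt (φ := (rotVars v : R2 →+* R2))
      (rotVars_reflVars hv0 u) (hmirror u) (hp.2 _ (by rw [hpow, hu]))⟩

/-- The antilinear involution of `ℂ[z, w]` interchanging `z` and `w`; it is `p ↦ p̄` if `w` is
regarded as the conjugate of `z`. -/
def starVars : R2 →+* R2 := (swapVars : R2 →+* R2).comp (MvPolynomial.map (starRingEnd ℂ))

@[simp] theorem starVars_C (c : ℂ) : starVars (C c) = C (starRingEnd ℂ c) := by
  simp [starVars]

@[simp] theorem starVars_zP : starVars zP = wP := by
  rw [starVars, RingHom.comp_apply, zP, map_X]; exact swapVars_zP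

@[simp] theorem starVars_wP : starVars wP = zP := by
  rw [starVars, RingHom.comp_apply, wP, map_X]; exact swapVars_wP

theorem starVars_rotVars (hu : starRingEnd ℂ u = u⁻¹) (p : R2) :
    starVars (rotVars u p) = rotVars u (starVars p) := by
  have h : starVars.comp (rotVars u : R2 →+* R2) = (rotVars u : R2 →+* R2).comp starVars :=
    ringHom_ext_zw (by simp) (by simp [hu]) (by simp [hu])
  exact DFunLike.congr_fun h p

theorem starVars_reflVars (hu : starRingEnd ℂ u = u⁻¹) (p : R2) :
    starVars (reflVars u p) = reflVars u (starVars p) := by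
  have h : starVars.comp (reflVars u : R2 →+* R2) = (reflVars u : R2 →+* R2).comp starVars :=
    ringHom_ext_zw (by simp) (by simp [hu]) (by simp [hu])
  exact DFunLike.congr_fun h p

theorem starVars_mem_quasiInvariantsAt (hu : ‖u‖ = 1) (hp : p ∈ quasiInvariantsAt u k) :
    starVars p ∈ quasiInvariantsAt u k := by
  have hstar : starRingEnd ℂ u = u⁻¹ := by
    rw [Complex.inv_def, Complex.normSq_eq_norm_sq, hu]; simp
  refine map_mem_quasiInvariantsAt (starVars_reflVars hstar) ⟨-C u⁻¹, ?_⟩ hp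
  have h : (C u * C u⁻¹ : R2) = 1 := by
    rw [← C_mul, mul_inv_cancel₀ (norm_ne_zero_iff.mp (hu ▸ one_ne_zero)), C_1]
  simp only [mirror, map_sub, map_mul, starVars_C, starVars_zP, starVars_wP, hstar]
  linear_combination -wP * h

theorem starVars_mem_quasiInvariants (hN : 1 ≤ N) (hp : p ∈ quasiInvariants N m n) :
    starVars p ∈ quasiInvariants N m n := by
  have hnorm {u : ℂ} (hu : ‖u ^ N‖ = 1) : ‖u‖ = 1 := by
    rw [norm_pow] at hu
    exact (pow_eq_one_iff_of_nonneg (norm_nonneg u) (by omega)).mp hu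
  rw [mem_quasiInvariants] at hp ⊢
  exact ⟨fun u hu => starVars_mem_quasiInvariantsAt (hnorm (by simp [hu])) (hp.1 u hu),
    fun u hu => starVars_mem_quasiInvariantsAt (hnorm (by simp [hu])) (hp.2 u hu)⟩

end QuasiInvariants

section ShiftOperators

variable {N k : ℕ} {s u : ℂ} {δ κ p : R2}

/-- The derivation `z ∂/∂z - w ∂/∂w`, the infinitesimal generator of the rotations. -/
def angularDerivation : Derivation ℂ R2 R2 := mkDerivation ℂ ![zP, -wP]

@[simp] theorem angularDerivation_zP : angularDerivation zP = zP := mkDerivation_X ..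

@[simp] theorem angularDerivation_wP : angularDerivation wP = -wP := mkDerivation_X ..

@[simp] theorem angularDerivation_C (c : ℂ) : angularDerivation (C c) = 0 :=
  angularDerivation.map_algebraMap c

theorem angularDerivation_zP_pow (a : ℕ) : angularDerivation (zP ^ a) = C (a : ℂ) * zP ^ a := by
  cases a with
  | zero => simp
  | succ a =>
    rw [Derivation.leibniz_pow, angularDerivation_zP, smul_eq_mul, nsmul_eq_mul,
      Nat.add_sub_cancel, pow_succ, map_natCast]

theorem angularDerivation_wP_pow (a : ℕ) :
    angularDerivation (wP ^ a) = -(C (a : ℂ) * wP ^ a) := by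
  cases a with
  | zero => simp
  | succ a =>
    rw [Derivation.leibniz_pow, angularDerivation_wP, smul_eq_mul, nsmul_eq_mul,
      Nat.add_sub_cancel, pow_succ, map_natCast]
    ring

theorem angularDerivation_reflVars (u : ℂ) (p : R2) :
    angularDerivation (reflVars u p) = -reflVars u (angularDerivation p) := by
  induction p using MvPolynomial.induction_on with
  | C a => simp
  | add p q hp hq => simp only [map_add, hp, hq]; ring
  | mul_X p i hp =>
    have hz : angularDerivation (reflVars u zP) = -reflVars u (angularDerivation zP) := by simp
    have hw : angularDerivation (reflVars u wP) = -reflVars u (angularDerivation wP) := by simp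
    have hX : ∀ i, angularDerivation (reflVars u (X i)) = -reflVars u (angularDerivation (X i)) :=
      Fin.forall_fin_two.mpr ⟨hz, hw⟩
    simp only [map_mul, Derivation.leibniz, hX, hp, smul_eq_mul, map_add]
    ring

/-- The first-order operator `δ E - κ`, where `E` is the angular derivation; for suitable `δ` and
`κ` it shifts the multiplicity of a mirror from `k` to `k + 1`. -/
def shiftOperator (δ κ : R2) : R2 →ₗ[ℂ] R2 :=
  δ • (angularDerivation : R2 →ₗ[ℂ] R2) - κ • LinearMap.id

theorem shiftOperator_apply (δ κ p : R2) :
    shiftOperator δ κ p = δ * angularDerivation p - κ * p := rfl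

theorem reflVars_shiftOperator (hδ : reflVars u δ = -δ) (hκ : reflVars u κ = κ) (p : R2) :
    reflVars u (shiftOperator δ κ p) = shiftOperator δ κ (reflVars u p) := by
  simp only [shiftOperator_apply, map_sub, map_mul, hδ, hκ, angularDerivation_reflVars]
  ring

theorem mirror_pow_succ_dvd_of_reflVars_eq_neg (hu : u ≠ 0) (hp : reflVars u p = -p)
    (h : mirror u ^ (2 * k) ∣ p) : mirror u ^ (2 * k + 1) ∣ p := by
  obtain ⟨r, rfl⟩ := h
  have hr : reflVars u r = -r := by
    rw [map_mul, map_pow, reflVars_mirror hu, (even_two_mul k).neg_pow, ← mul_neg] at hp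
    exact mul_left_cancel₀ (pow_ne_zero _ (mirror_ne_zero u)) hp
  have hdvd : mirror u ∣ C (-2) * r := by
    have h₀ : r ∈ quasiInvariantsAt u 0 := quasiInvariantsAt_zero hu ▸ Algebra.mem_top
    rw [mem_quasiInvariantsAt, hr, mul_zero, zero_add, pow_one] at h₀
    convert h₀ using 1
    rw [C_neg, map_ofNat]
    ring
  rw [pow_succ]
  exact mul_dvd_mul_left _ ((isUnit_C (by norm_num)).dvd_mul_left.mp hdvd)

theorem mirror_pow_dvd_shiftOperator (hδ : mirror u ∣ δ)
    (hκ : mirror u ∣ C (k : ℂ) * angularDerivation δ - κ) (hp : mirror u ^ k ∣ p) :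
    mirror u ^ (k + 1) ∣ shiftOperator δ κ p := by
  obtain ⟨r, rfl⟩ := hp
  obtain ⟨g, rfl⟩ := hδ
  obtain ⟨y, hy⟩ := hκ
  have hpow : mirror u * angularDerivation (mirror u ^ k)
      = C (k : ℂ) * mirror u ^ k * angularDerivation (mirror u) := by
    cases k with
    | zero => simp
    | succ k =>
      rw [Derivation.leibniz_pow, smul_eq_mul, nsmul_eq_mul, Nat.add_sub_cancel, map_natCast]
      ring
  refine ⟨y * r + g * angularDerivation r - C (k : ℂ) * angularDerivation g * r, ?_⟩
  rw [shiftOperator_apply]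
  rw [Derivation.leibniz] at hy ⊢
  simp only [smul_eq_mul] at hy ⊢
  linear_combination g * r * hpow + mirror u ^ k * r * hy

theorem shiftOperator_mem_quasiInvariantsAt (hu : u ≠ 0) (hδu : reflVars u δ = -δ)
    (hκu : reflVars u κ = κ) (hδ : mirror u ∣ δ)
    (hκ : mirror u ∣ C ((2 * k + 1 : ℕ) : ℂ) * angularDerivation δ - κ)
    (hp : p ∈ quasiInvariantsAt u k) : shiftOperator δ κ p ∈ quasiInvariantsAt u (k + 1) := by
  rw [mem_quasiInvariantsAt, reflVars_shiftOperator hδu hκu, ← map_sub]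
  refine mirror_pow_succ_dvd_of_reflVars_eq_neg hu ?_ (mirror_pow_dvd_shiftOperator hδ hκ hp)
  rw [reflVars_shiftOperator hδu hκu, map_sub, reflVars_reflVars hu, ← map_neg, neg_sub]

/-- The form `z ^ N - s w ^ N`, which is up to a scalar the product of the mirrors `z = u w` with
`u ^ N = s`. -/
def mirrorProduct (N : ℕ) (s : ℂ) : R2 := zP ^ N - C s * wP ^ N

theorem mirrorProduct_one : mirrorProduct N 1 = zP ^ N - wP ^ N := by
  rw [mirrorProduct, C_1, one_mul]

theorem mirrorProduct_neg_one : mirrorProduct N (-1) = zP ^ N + wP ^ N := by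
  rw [mirrorProduct, C_neg, C_1, neg_one_mul, sub_neg_eq_add]

theorem angularDerivation_mirrorProduct (N : ℕ) (s : ℂ) :
    angularDerivation (mirrorProduct N s) = C (N : ℂ) * mirrorProduct N (-s) := by
  simp only [mirrorProduct, map_sub, Derivation.leibniz, angularDerivation_C,
    angularDerivation_zP_pow, angularDerivation_wP_pow, smul_eq_mul, C_neg]
  ring

theorem mirror_dvd_mirrorProduct (u : ℂ) (N : ℕ) : mirror u ∣ mirrorProduct N (u ^ N) := by
  have h := sub_dvd_pow_sub_pow zP (C u * wP) N
  rwa [mul_pow, ← C_pow] at h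

theorem reflVars_mirrorProduct (hs : s ^ 2 = 1) (hu : (u ^ N) ^ 2 = 1) :
    reflVars u (mirrorProduct N s) = C (-(s * u ^ N)) * mirrorProduct N s := by
  have hinv : (u ^ N)⁻¹ = u ^ N := inv_eq_of_mul_eq_one_left (by rw [← pow_two, hu])
  have hs' : (C s * C s : R2) = 1 := by rw [← C_mul, ← pow_two, hs, C_1]
  simp only [mirrorProduct, map_sub, map_mul, map_pow, algHom_C, reflVars_zP, reflVars_wP, mul_pow]
  rw [← C_pow, ← C_pow, inv_pow, hinv, C_neg, C_mul]
  linear_combination -C (u ^ N) * wP ^ N * hs'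

end ShiftOperators

section Forms

variable {N i M d m n : ℕ} {f g δ κ : R2}

/-- The value at `(z, w) = (1, 0)`, which for a form is the coefficient of the pure power of
`z`. -/
def evalOneZero : R2 →ₐ[ℂ] ℂ := aeval ![1, 0]

@[simp] theorem evalOneZero_zP : evalOneZero zP = 1 := aeval_X ..

@[simp] theorem evalOneZero_wP : evalOneZero wP = 0 := aeval_X ..

@[simp] theorem evalOneZero_C (c : ℂ) : evalOneZero (C c) = c := evalOneZero.commutes c

theorem evalOneZero_swapVars_starVars (f : R2) :
    evalOneZero (swapVars (starVars f)) = starRingEnd ℂ (evalOneZero f) := by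
  have h : ((evalOneZero.comp swapVars : R2 →ₐ[ℂ] ℂ) : R2 →+* ℂ).comp starVars =
      (starRingEnd ℂ).comp (evalOneZero : R2 →+* ℂ) :=
    ringHom_ext_zw (by simp) (by simp) (by simp)
  exact DFunLike.congr_fun h f

/-- The space of forms `∑ c_{a,b} z^{aN+i} w^{bN}` with `a + b = M`. -/
def forms (N i M : ℕ) : Submodule ℂ R2 :=
  Submodule.span ℂ {f | ∃ a b, a + b = M ∧ zP ^ (a * N + i) * wP ^ (b * N) = f}

theorem zP_pow_mul_wP_pow_mem_forms {a b : ℕ} (h : a + b = M) :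
    zP ^ (a * N + i) * wP ^ (b * N) ∈ forms N i M :=
  Submodule.subset_span ⟨a, b, h, rfl⟩

theorem forms_le {W : Submodule ℂ R2}
    (h : ∀ a b, a + b = M → zP ^ (a * N + i) * wP ^ (b * N) ∈ W) : forms N i M ≤ W :=
  Submodule.span_le.mpr (by rintro _ ⟨a, b, hab, rfl⟩; exact h a b hab)

theorem mul_mem_forms (hg : g ∈ forms N 0 d) (hf : f ∈ forms N i M) :
    g * f ∈ forms N i (M + d) := by
  have h : forms N 0 d * forms N i M ≤ forms N i (M + d) := by
    rw [forms, forms, Submodule.span_mul_span, Submodule.span_le]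
    rintro _ ⟨_, ⟨a, b, hab, rfl⟩, _, ⟨a', b', hab', rfl⟩, rfl⟩
    have hmul : zP ^ (a * N + 0) * wP ^ (b * N) * (zP ^ (a' * N + i) * wP ^ (b' * N))
        = zP ^ ((a + a') * N + i) * wP ^ ((b + b') * N) := by ring
    change zP ^ (a * N + 0) * wP ^ (b * N) * (zP ^ (a' * N + i) * wP ^ (b' * N)) ∈ forms N i _
    exact hmul ▸ zP_pow_mul_wP_pow_mem_forms (by omega)
  exact h (Submodule.mul_mem_mul hg hf)

theorem C_mul_mem_forms (c : ℂ) (hf : f ∈ forms N i M) : C c * f ∈ forms N i M :=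
  C_mul' (R := ℂ) (p := f) ▸ Submodule.smul_mem _ c hf

theorem mirrorProduct_mem_forms (N : ℕ) (s : ℂ) : mirrorProduct N s ∈ forms N 0 1 := by
  refine sub_mem ?_ (C_mul_mem_forms s ?_)
  · simpa using zP_pow_mul_wP_pow_mem_forms (N := N) (i := 0) (add_zero 1)
  · simpa using zP_pow_mul_wP_pow_mem_forms (N := N) (i := 0) (zero_add 1)

theorem angularDerivation_zP_pow_mul_wP_pow (a b : ℕ) :
    angularDerivation (zP ^ a * wP ^ b) = C ((a : ℂ) - b) * (zP ^ a * wP ^ b) := by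
  rw [Derivation.leibniz, angularDerivation_zP_pow, angularDerivation_wP_pow, C_sub, smul_eq_mul,
    smul_eq_mul]
  ring

theorem angularDerivation_mem_forms (hf : f ∈ forms N i M) : angularDerivation f ∈ forms N i M := by
  have h : forms N i M ≤ (forms N i M).comap (angularDerivation : R2 →ₗ[ℂ] R2) :=
    forms_le fun a b hab => by
      simpa only [Submodule.mem_comap, Derivation.coeFn_coe, angularDerivation_zP_pow_mul_wP_pow]
        using C_mul_mem_forms _ (zP_pow_mul_wP_pow_mem_forms hab)
  exact h hf

theorem shiftOperator_mem_forms (hδ : δ ∈ forms N 0 d) (hκ : κ ∈ forms N 0 d)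
    (hf : f ∈ forms N i M) : shiftOperator δ κ f ∈ forms N i (M + d) :=
  sub_mem (mul_mem_forms hδ (angularDerivation_mem_forms hf)) (mul_mem_forms hκ hf)

theorem evalOneZero_angularDerivation (hN : 1 ≤ N) (hf : f ∈ forms N i M) :
    evalOneZero (angularDerivation f) = ((M * N + i : ℕ) : ℂ) * evalOneZero f := by
  have h : forms N i M ≤ LinearMap.eqLocus
      (evalOneZero.toLinearMap ∘ₗ (angularDerivation : R2 →ₗ[ℂ] R2))
      (((M * N + i : ℕ) : ℂ) • evalOneZero.toLinearMap) := by
    refine forms_le fun a b hab => ?_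
    change evalOneZero (angularDerivation _) = ((M * N + i : ℕ) : ℂ) * evalOneZero _
    rw [angularDerivation_zP_pow_mul_wP_pow]
    rcases Nat.eq_zero_or_pos b with rfl | hb
    · simp [← hab]
    · simp [show b ≠ 0 by omega, show N ≠ 0 by omega]
  exact h hf

theorem evalOneZero_shiftOperator (hN : 1 ≤ N) (hf : f ∈ forms N i M) :
    evalOneZero (shiftOperator δ κ f)
      = (evalOneZero δ * ((M * N + i : ℕ) : ℂ) - evalOneZero κ) * evalOneZero f := by
  rw [shiftOperator_apply, map_sub, map_mul, map_mul, evalOneZero_angularDerivation hN hf]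
  ring

theorem evalOneZero_swapVars_eq_zero (hi : i ≠ 0) (hf : f ∈ forms N i M) :
    evalOneZero (swapVars f) = 0 := by
  have h : forms N i M ≤ LinearMap.ker (evalOneZero.comp swapVars).toLinearMap :=
    forms_le fun a b _ => by simp [hi]
  exact h hf

theorem evalOneZero_mirrorProduct (hN : 1 ≤ N) (s : ℂ) : evalOneZero (mirrorProduct N s) = 1 := by
  simp [mirrorProduct, show N ≠ 0 by omega]

theorem isHomogeneous_of_mem_forms (hf : f ∈ forms N i M) : f.IsHomogeneous (M * N + i) := by
  have h : forms N i M ≤ homogeneousSubmodule (Fin 2) ℂ (M * N + i) := by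
    refine forms_le fun a b hab => ?_
    rw [mem_homogeneousSubmodule, ← hab, show (a + b) * N + i = a * N + i + b * N by ring]
    exact (isHomogeneous_X_pow _ _).mul (isHomogeneous_X_pow _ _)
  exact h hf

theorem q1i_mem_forms (N m n i : ℕ) (a : ℕ → ℂ) : q1i N m n i a ∈ forms N i (m + n) := by
  refine sum_mem fun s hs => ?_
  rw [mem_range] at hs
  rw [mul_assoc, mul_comm N s]
  exact C_mul_mem_forms _ (zP_pow_mul_wP_pow_mem_forms (by omega))

theorem exists_q1i_eq (hf : f ∈ forms N i (m + n)) : ∃ a, q1i N m n i a = f := by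
  induction hf using Submodule.span_induction with
  | mem f hf =>
    obtain ⟨a, b, hab, rfl⟩ := hf
    refine ⟨Pi.single b 1, ?_⟩
    rw [q1i, sum_eq_single_of_mem b (by rw [mem_range]; omega)]
    · rw [Pi.single_eq_same, C_1, one_mul, ← hab, Nat.add_sub_cancel, mul_comm N b]
    · intro s _ hs
      rw [Pi.single_eq_of_ne hs, C_0, zero_mul, zero_mul]
  | zero => exact ⟨0, by simp [q1i]⟩
  | add f g _ _ hf hg =>
    obtain ⟨a, rfl⟩ := hf
    obtain ⟨b, rfl⟩ := hg
    exact ⟨a + b, by simp only [q1i, Pi.add_apply, C_add, add_mul, sum_add_distrib]⟩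
  | smul c f _ hf =>
    obtain ⟨a, rfl⟩ := hf
    exact ⟨c • a, by simp only [q1i, Pi.smul_apply, smul_eq_mul, C_mul, mul_assoc, ← mul_sum,
      smul_eq_C_mul]⟩

theorem evalOneZero_q1i (hN : 1 ≤ N) (m n i : ℕ) (a : ℕ → ℂ) :
    evalOneZero (q1i N m n i a) = a 0 := by
  rw [q1i, map_sum, sum_eq_single_of_mem 0 (by simp)]
  · simp
  · intro s _ hs
    simp [hs, show N ≠ 0 by omega]

theorem starVars_q1i (N m n i : ℕ) (a : ℕ → ℂ) : starVars (q1i N m n i a) = q2i N m n i a := by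
  simp only [q1i, q2i, map_sum, map_mul, map_pow, starVars_C, starVars_zP, starVars_wP]

end Forms

section Seeds

variable {N i M m n k : ℕ} {s u : ℂ} {f p : R2}

/-- The shift operator raising the multiplicity of the mirrors `z = u w` with `u ^ N = s` from `k`
to `k + 1`, the other orbit of mirrors having multiplicity zero. -/
def orbitShift (N k : ℕ) (s : ℂ) : R2 →ₗ[ℂ] R2 :=
  shiftOperator (mirrorProduct N s) (C ((N * (2 * k + 1) : ℕ) : ℂ) * mirrorProduct N (-s))

/-- The shift operator raising both multiplicities: with `D = P ^ (2m+1) Q ^ (2n+1)`, `P` and `Q`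
being the products of the mirrors of the two orbits, it is `p ↦ P Q (E p - (E D / D) p)`. -/
def fullShift (N m n : ℕ) : R2 →ₗ[ℂ] R2 :=
  shiftOperator (mirrorProduct N 1 * mirrorProduct N (-1))
    (C ((N * (2 * m + 1) : ℕ) : ℂ) * mirrorProduct N (-1) ^ 2 +
      C ((N * (2 * n + 1) : ℕ) : ℂ) * mirrorProduct N 1 ^ 2)

theorem orbitShift_mem_quasiInvariantsAt (hN : 1 ≤ N) (hs : s ^ 2 = 1) (hu : u ^ N = s)
    (hp : p ∈ quasiInvariantsAt u k) : orbitShift N k s p ∈ quasiInvariantsAt u (k + 1) := by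
  have hu2 : (u ^ N) ^ 2 = 1 := hu ▸ hs
  have hu0 : u ≠ 0 := ne_zero_of_pow_eq_one (N := 2 * N) (by omega) (by rw [mul_comm, pow_mul, hu2])
  refine shiftOperator_mem_quasiInvariantsAt hu0 ?_ ?_ ?_ ?_ hp
  · rw [reflVars_mirrorProduct hs hu2, hu, ← pow_two, hs, C_neg, C_1, neg_one_mul]
  · rw [map_mul, algHom_C, reflVars_mirrorProduct (by rwa [neg_sq]) hu2, hu, neg_mul, neg_neg,
      ← pow_two, hs, C_1, one_mul]
  · exact hu ▸ mirror_dvd_mirrorProduct u N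
  · rw [angularDerivation_mirrorProduct, ← mul_assoc, ← C_mul, ← Nat.cast_mul, mul_comm N, sub_self]
    exact dvd_zero _

theorem reflVars_mirrorProduct_one_mul_neg_one (hu : (u ^ N) ^ 2 = 1) :
    reflVars u (mirrorProduct N 1 * mirrorProduct N (-1))
      = -(mirrorProduct N 1 * mirrorProduct N (-1)) := by
  have h : (C (u ^ N) * C (u ^ N) : R2) = 1 := by rw [← C_mul, ← pow_two, hu, C_1]
  rw [map_mul, reflVars_mirrorProduct (one_pow 2) hu, reflVars_mirrorProduct (by norm_num) hu]
  simp only [one_mul, neg_mul, neg_neg, C_neg]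
  linear_combination -mirrorProduct N 1 * mirrorProduct N (-1) * h

theorem reflVars_mirrorProduct_sq (hs : s ^ 2 = 1) (hu : (u ^ N) ^ 2 = 1) :
    reflVars u (mirrorProduct N s ^ 2) = mirrorProduct N s ^ 2 := by
  rw [map_pow, reflVars_mirrorProduct hs hu, mul_pow, ← C_pow, neg_sq, mul_pow, hs, hu, one_mul,
    C_1, one_mul]

theorem fullShift_mem_quasiInvariants (hN : 1 ≤ N) (hp : p ∈ quasiInvariants N m n) :
    fullShift N m n p ∈ quasiInvariants N (m + 1) (n + 1) := by
  have hκ {u : ℂ} (hu : (u ^ N) ^ 2 = 1) (a b : ℂ) :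
      reflVars u (C a * mirrorProduct N (-1) ^ 2 + C b * mirrorProduct N 1 ^ 2)
        = C a * mirrorProduct N (-1) ^ 2 + C b * mirrorProduct N 1 ^ 2 := by
    rw [map_add, map_mul, map_mul, algHom_C, algHom_C, reflVars_mirrorProduct_sq (by norm_num) hu,
      reflVars_mirrorProduct_sq (one_pow 2) hu]
  have hE : angularDerivation (mirrorProduct N 1 * mirrorProduct N (-1))
      = C (N : ℂ) * (mirrorProduct N 1 ^ 2 + mirrorProduct N (-1) ^ 2) := by
    rw [Derivation.leibniz, angularDerivation_mirrorProduct, angularDerivation_mirrorProduct,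
      neg_neg, smul_eq_mul, smul_eq_mul]
    ring
  rw [mem_quasiInvariants] at hp ⊢
  refine ⟨fun u hu => ?_, fun u hu => ?_⟩
  · have hu2 : (u ^ N) ^ 2 = 1 := by rw [hu, one_pow]
    have hdvd : mirror u ∣ mirrorProduct N 1 := hu ▸ mirror_dvd_mirrorProduct u N
    refine shiftOperator_mem_quasiInvariantsAt (ne_zero_of_pow_eq_one hN hu)
      (reflVars_mirrorProduct_one_mul_neg_one hu2) (hκ hu2 _ _) (hdvd.mul_right _) ?_ (hp.1 u hu)
    refine hdvd.trans ⟨(N * (2 * m + 1) - N * (2 * n + 1)) * mirrorProduct N 1, ?_⟩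
    simp only [hE, map_natCast]
    push_cast
    ring
  · have hu2 : (u ^ N) ^ 2 = 1 := by rw [hu]; norm_num
    have hdvd : mirror u ∣ mirrorProduct N (-1) := hu ▸ mirror_dvd_mirrorProduct u N
    refine shiftOperator_mem_quasiInvariantsAt (ne_zero_of_pow_eq_neg_one hN hu)
      (reflVars_mirrorProduct_one_mul_neg_one hu2) (hκ hu2 _ _) (hdvd.mul_left _) ?_ (hp.2 u hu)
    refine hdvd.trans ⟨(N * (2 * n + 1) - N * (2 * m + 1)) * mirrorProduct N (-1), ?_⟩
    simp only [hE, map_natCast]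
    push_cast
    ring

theorem evalOneZero_orbitShift (hN : 1 ≤ N) (s : ℂ) (hf : f ∈ forms N i M) :
    evalOneZero (orbitShift N k s f)
      = (((M * N + i : ℕ) : ℂ) - ((N * (2 * k + 1) : ℕ) : ℂ)) * evalOneZero f := by
  rw [orbitShift, evalOneZero_shiftOperator hN hf, map_mul, evalOneZero_C,
    evalOneZero_mirrorProduct hN, evalOneZero_mirrorProduct hN, one_mul, mul_one]

theorem evalOneZero_fullShift (hN : 1 ≤ N) (hf : f ∈ forms N i M) :
    evalOneZero (fullShift N m n f)
      = (((M * N + i : ℕ) : ℂ) - ((N * (2 * (m + n + 1)) : ℕ) : ℂ)) * evalOneZero f := by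
  simp only [fullShift, evalOneZero_shiftOperator hN hf, map_mul, map_add, map_pow, evalOneZero_C,
    evalOneZero_mirrorProduct hN]
  push_cast
  ring

theorem orbitShift_mem_forms (k : ℕ) (s : ℂ) (hf : f ∈ forms N i M) :
    orbitShift N k s f ∈ forms N i (M + 1) :=
  shiftOperator_mem_forms (mirrorProduct_mem_forms N s)
    (C_mul_mem_forms _ (mirrorProduct_mem_forms N (-s))) hf

theorem fullShift_mem_forms (m n : ℕ) (hf : f ∈ forms N i M) :
    fullShift N m n f ∈ forms N i (M + 2) := by
  have hmul (s t : ℂ) : mirrorProduct N s * mirrorProduct N t ∈ forms N 0 (1 + 1) :=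
    mul_mem_forms (mirrorProduct_mem_forms N s) (mirrorProduct_mem_forms N t)
  rw [fullShift, pow_two, pow_two]
  exact shiftOperator_mem_forms (hmul 1 (-1))
    (add_mem (C_mul_mem_forms _ (hmul (-1) (-1))) (C_mul_mem_forms _ (hmul 1 1))) hf

theorem natCast_mul_add_sub_mul_ne_zero (hi : ¬N ∣ i) (M r : ℕ) :
    ((M * N + i : ℕ) : ℂ) - ((N * r : ℕ) : ℂ) ≠ 0 := by
  rw [sub_ne_zero, Nat.cast_injective.ne_iff]
  exact fun h => hi ((Nat.dvd_add_right (dvd_mul_left N M)).mp (h ▸ dvd_mul_right N r))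

theorem exists_quasiInvariant_form_evalOneZero_ne_zero (hN : 1 ≤ N) (hi : ¬N ∣ i) (m n : ℕ) :
    ∃ f ∈ forms N i (m + n), f ∈ quasiInvariants N m n ∧ evalOneZero f ≠ 0 := by
  induction m generalizing n with
  | zero =>
    induction n with
    | zero =>
      refine ⟨zP ^ i, ?_, ?_, by simp⟩
      · simpa using zP_pow_mul_wP_pow_mem_forms (N := N) (i := i) (add_zero 0)
      · rw [mem_quasiInvariants_zero_left hN]
        intro u hu
        exact quasiInvariantsAt_zero (ne_zero_of_pow_eq_neg_one hN hu) ▸ Algebra.mem_top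
    | succ n ih =>
      obtain ⟨f, hf, hqi, hlead⟩ := ih
      refine ⟨orbitShift N n (-1) f, orbitShift_mem_forms n (-1) hf, ?_, ?_⟩
      · rw [mem_quasiInvariants_zero_left hN] at hqi ⊢
        exact fun u hu => orbitShift_mem_quasiInvariantsAt hN (by norm_num) hu (hqi u hu)
      · rw [evalOneZero_orbitShift hN _ hf]
        exact mul_ne_zero (natCast_mul_add_sub_mul_ne_zero hi _ _) hlead
  | succ m ihm =>
    cases n with
    | zero =>
      obtain ⟨f, hf, hqi, hlead⟩ := ihm 0
      refine ⟨orbitShift N m 1 f, orbitShift_mem_forms m 1 hf, ?_, ?_⟩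
      · rw [mem_quasiInvariants_zero_right hN] at hqi ⊢
        exact fun u hu => orbitShift_mem_quasiInvariantsAt hN (one_pow 2) hu (hqi u hu)
      · rw [evalOneZero_orbitShift hN _ hf]
        exact mul_ne_zero (natCast_mul_add_sub_mul_ne_zero hi _ _) hlead
    | succ n =>
      obtain ⟨f, hf, hqi, hlead⟩ := ihm n
      refine ⟨fullShift N m n f, ?_, fullShift_mem_quasiInvariants hN hqi, ?_⟩
      · exact (by omega : m + 1 + (n + 1) = m + n + 2) ▸ fullShift_mem_forms m n hf
      · rw [evalOneZero_fullShift hN hf]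
        exact mul_ne_zero (natCast_mul_add_sub_mul_ne_zero hi _ _) hlead

end Seeds

section Eigenvectors

open Polynomial (aeval)

variable {K V ι : Type*} [Field K] [AddCommGroup V] [Module K V] {T : Module.End K V}
  {s : Finset ι} {μ : ι → K}

theorem eq_zero_of_sum_mem_eigenspace_eq_zero {x : ι → V} (hμ : Set.InjOn μ s)
    (hx : ∀ i ∈ s, x i ∈ T.eigenspace (μ i)) (hsum : ∑ i ∈ s, x i = 0) : ∀ i ∈ s, x i = 0 := by
  have hind := T.eigenspaces_iSupIndep.comp (Set.injOn_iff_injective.mp hμ)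
  rw [iSupIndep_iff_finsetSum_eq_zero_imp_eq_zero] at hind
  intro i hi
  exact hind univ (fun j => x j) (fun j _ => hx j j.2) ((sum_coe_sort s x).trans hsum)
    ⟨i, hi⟩ (mem_univ _)

-- The Lagrange basis polynomials at the eigenvalues, evaluated at `T`, are the projections.
theorem exists_sum_mem_eigenspace_eq (hμ : Set.InjOn μ s) (hs : s.Nonempty)
    (hT : aeval T (Lagrange.nodal s μ) = 0) {W : Submodule K V} (hW : W ≤ W.comap T) {x : V}
    (hx : x ∈ W) :
    ∃ y : ι → V, (∀ i ∈ s, y i ∈ W ∧ y i ∈ T.eigenspace (μ i)) ∧ ∑ i ∈ s, y i = x := by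
  classical
  refine ⟨fun i => aeval T (Lagrange.basis s μ i) x, fun i hi => ⟨?_, ?_⟩, ?_⟩
  · exact Polynomial.aeval_apply_smul_mem_of_le_comap hx _ T hW
  · have hker : aeval T ((Polynomial.X - Polynomial.C (μ i)) * Lagrange.basis s μ i) = 0 := by
      rw [Lagrange.basis_eq_prod_sub_inv_mul_nodal_div hi, mul_left_comm,
        EuclideanDomain.mul_div_cancel' (Polynomial.X_sub_C_ne_zero _)
          (Lagrange.X_sub_C_dvd_nodal μ hi), map_mul, hT, mul_zero]
    rw [Module.End.mem_eigenspace_iff, ← sub_eq_zero]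
    simpa using LinearMap.congr_fun hker x
  · rw [← LinearMap.sum_apply, ← map_sum, Lagrange.sum_basis hμ hs, map_one, Module.End.one_apply]

end Eigenvectors

section Weights

variable {N : ℕ} {μ ν : ℂ} {p q s : R2}

/-- The polynomials `p` with `rotVars ε p = μ p`: the isotypic components of `ℂ[z, w]` under the
rotation subgroup of `I₂(2N)`. -/
def weightSpace (N : ℕ) (μ : ℂ) : Submodule ℂ R2 :=
  Module.End.eigenspace (rotVars (eps N)).toLinearMap μ

theorem mem_weightSpace : p ∈ weightSpace N μ ↔ rotVars (eps N) p = C μ * p := by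
  rw [weightSpace, Module.End.mem_eigenspace_iff, C_mul', AlgHom.toLinearMap_apply]

theorem one_mem_weightSpace (N : ℕ) : 1 ∈ weightSpace N 1 := by simp [mem_weightSpace]

theorem mul_mem_weightSpace (hp : p ∈ weightSpace N μ) (hq : q ∈ weightSpace N ν) :
    p * q ∈ weightSpace N (μ * ν) := by
  rw [mem_weightSpace] at *
  rw [map_mul, hp, hq, C_mul]
  ring

theorem pow_mem_weightSpace (hp : p ∈ weightSpace N μ) (k : ℕ) :
    p ^ k ∈ weightSpace N (μ ^ k) := by
  rw [mem_weightSpace] at *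
  rw [map_pow, hp, mul_pow, C_pow]

theorem swapVars_mem_weightSpace (hμ : μ ≠ 0) (hp : p ∈ weightSpace N μ) :
    swapVars p ∈ weightSpace N μ⁻¹ := by
  have h : rotVars (eps N)⁻¹ p = C μ⁻¹ * p := by
    rw [mem_weightSpace] at hp
    calc rotVars (eps N)⁻¹ p = rotVars (eps N)⁻¹ (C μ⁻¹ * (C μ * p)) := by
          rw [← mul_assoc, ← C_mul, inv_mul_cancel₀ hμ, C_1, one_mul]
      _ = C μ⁻¹ * p := by
          rw [← hp, map_mul, rotVars_inv_apply (eps_ne_zero N), algHom_C]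
  rw [mem_weightSpace, rotVars_swapVars, h, map_mul, algHom_C]

theorem rotVars_eps_pow_of_mem_weightSpace (hp : p ∈ weightSpace N μ) (j : ℕ) :
    rotVars (eps N ^ j) p = C (μ ^ j) * p := by
  induction j with
  | zero => simp [rotVars_one]
  | succ j ih =>
    rw [pow_succ, ← rotVars_rotVars, mem_weightSpace.mp hp, map_mul, algHom_C, ih, ← mul_assoc,
      ← C_mul, pow_succ']

theorem starRingEnd_eps (hN : 1 ≤ N) : starRingEnd ℂ (eps N) = (eps N)⁻¹ := by
  rw [Complex.inv_def, Complex.normSq_eq_norm_sq,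
    (isPrimitiveRoot_eps hN).norm'_eq_one (by omega)]
  simp

theorem starVars_mem_weightSpace (hN : 1 ≤ N) (hp : p ∈ weightSpace N μ) :
    starVars p ∈ weightSpace N (starRingEnd ℂ μ) := by
  rw [mem_weightSpace] at *
  rw [← starVars_rotVars (starRingEnd_eps hN), hp, map_mul, starVars_C]

theorem zP_pow_mul_wP_pow_mem_weightSpace (N a b : ℕ) :
    zP ^ a * wP ^ b ∈ weightSpace N (eps N ^ a * (eps N)⁻¹ ^ b) := by
  rw [mem_weightSpace]
  simp only [map_mul, map_pow, rotVars_zP, rotVars_wP, mul_pow]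
  ring

theorem forms_le_weightSpace (hN : 1 ≤ N) (i M : ℕ) :
    forms N i M ≤ weightSpace N (eps N ^ (M * N + i)) := by
  refine forms_le fun a b hab => ?_
  have h2N : eps N ^ (b * N) * eps N ^ (b * N) = 1 := by
    rw [← mul_pow, mul_comm b, pow_mul, mul_pow, eps_pow_self hN]; simp
  have h : eps N ^ (M * N + i) = eps N ^ (a * N + i) * (eps N)⁻¹ ^ (b * N) := by
    rw [inv_pow, inv_eq_of_mul_eq_one_left h2N, ← pow_add, ← hab]
    ring
  exact h ▸ zP_pow_mul_wP_pow_mem_weightSpace N _ _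

theorem mirrorProduct_mem_weightSpace (hN : 1 ≤ N) (s : ℂ) :
    mirrorProduct N s ∈ weightSpace N (-1) := by
  have h := forms_le_weightSpace hN 0 1 (mirrorProduct_mem_forms N s)
  rwa [add_zero, one_mul, eps_pow_self hN] at h

theorem aeval_rotVars_nodal (hN : 1 ≤ N) {μ : ℕ → ℂ} (hμ : Set.InjOn μ (range (2 * N)))
    (hroot : ∀ i ∈ range (2 * N), μ i ^ (2 * N) = 1) :
    Polynomial.aeval (rotVars (eps N)).toLinearMap (Lagrange.nodal (range (2 * N)) μ) = 0 := by
  have hprim := isPrimitiveRoot_eps hN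
  have himage : (range (2 * N)).image μ = Polynomial.nthRootsFinset (2 * N) (1 : ℂ) := by
    refine eq_of_subset_of_card_le (image_subset_iff.mpr fun i hi => ?_) ?_
    · exact (Polynomial.mem_nthRootsFinset (by omega) _).mpr (hroot i hi)
    · rw [hprim.card_nthRootsFinset, card_image_of_injOn hμ, card_range]
  have hnodal : Lagrange.nodal (range (2 * N)) μ = Polynomial.X ^ (2 * N) - 1 := by
    rw [Polynomial.X_pow_sub_one_eq_prod (by omega) hprim, ← himage, prod_image hμ,
      Lagrange.nodal]
  rw [hnodal, map_sub, map_pow, Polynomial.aeval_X, map_one, rotVars_pow, hprim.pow_eq_one,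
    rotVars_one]
  exact sub_self _

theorem zP_mul_wP_mem_Sinv (N : ℕ) : zP * wP ∈ Sinv N := Algebra.subset_adjoin (by simp)

theorem zP_pow_add_wP_pow_mem_Sinv (N t : ℕ) :
    zP ^ (2 * N * t) + wP ^ (2 * N * t) ∈ Sinv N := by
  have hsum : zP ^ (2 * N) + wP ^ (2 * N) ∈ Sinv N := Algebra.subset_adjoin (by simp)
  induction t using Nat.twoStepInduction with
  | zero => exact add_mem (by simp) (by simp)
  | one => simpa only [mul_one] using hsum
  | more t h₀ h₁ =>
    have hrec : zP ^ (2 * N * (t + 2)) + wP ^ (2 * N * (t + 2))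
        = (zP ^ (2 * N) + wP ^ (2 * N)) * (zP ^ (2 * N * (t + 1)) + wP ^ (2 * N * (t + 1)))
          - (zP * wP) ^ (2 * N) * (zP ^ (2 * N * t) + wP ^ (2 * N * t)) := by
      ring
    rw [hrec]
    exact sub_mem (mul_mem hsum h₁) (mul_mem (pow_mem (zP_mul_wP_mem_Sinv N) _) h₀)

theorem zP_pow_mul_wP_pow_add_swap_mem_Sinv (hN : 1 ≤ N) {a b : ℕ} (h : eps N ^ a = eps N ^ b) :
    zP ^ a * wP ^ b + wP ^ a * zP ^ b ∈ Sinv N := by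
  wlog hab : b ≤ a generalizing a b
  · rw [add_comm, mul_comm (wP ^ a), mul_comm (zP ^ a)]
    exact this h.symm (by omega)
  obtain ⟨c, rfl⟩ := Nat.exists_eq_add_of_le hab
  have hc : eps N ^ c = 1 :=
    mul_left_cancel₀ (pow_ne_zero b (eps_ne_zero N)) (by rw [← pow_add, h, mul_one])
  obtain ⟨t, rfl⟩ := (isPrimitiveRoot_eps hN).dvd_of_pow_eq_one _ hc
  have hfac : zP ^ (b + 2 * N * t) * wP ^ b + wP ^ (b + 2 * N * t) * zP ^ b
      = (zP * wP) ^ b * (zP ^ (2 * N * t) + wP ^ (2 * N * t)) := by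
    ring
  rw [hfac]
  exact mul_mem (pow_mem (zP_mul_wP_mem_Sinv N) _) (zP_pow_add_wP_pow_mem_Sinv N t)

theorem coeff_rotVars (u : ℂ) (p : R2) (d : Fin 2 →₀ ℕ) :
    coeff d (rotVars u p) = u ^ d 0 * u⁻¹ ^ d 1 * coeff d p := by
  induction p using MvPolynomial.induction_on' with
  | monomial e c =>
    have h : rotVars u (monomial e c) = C (u ^ e 0 * u⁻¹ ^ e 1) * monomial e c := by
      simp only [monomial_eq_C_mul_zP_pow_mul_wP_pow, map_mul, map_pow, algHom_C, rotVars_zP,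
        rotVars_wP, mul_pow]
      ring
    rw [h, coeff_C_mul, coeff_monomial]
    split_ifs with hed
    · rw [hed]
    · simp
  | add p q hp hq => rw [map_add, coeff_add, coeff_add, hp, hq, mul_add]

theorem eps_pow_eq_of_mem_support (hp : p ∈ weightSpace N 1) {d : Fin 2 →₀ ℕ}
    (hd : d ∈ p.support) : eps N ^ d 0 = eps N ^ d 1 := by
  have h := congrArg (coeff d) (mem_weightSpace.mp hp)
  rw [coeff_rotVars, C_1, one_mul, mul_eq_right₀ (mem_support_iff.mp hd), inv_pow,
    mul_inv_eq_one₀ (pow_ne_zero _ (eps_ne_zero N))] at h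
  exact h

theorem add_swapVars_mem_Sinv (hN : 1 ≤ N) (hp : p ∈ weightSpace N 1) :
    p + swapVars p ∈ Sinv N := by
  have h : p + swapVars p = ∑ d ∈ p.support,
      C (coeff d p) * (zP ^ d 0 * wP ^ d 1 + wP ^ d 0 * zP ^ d 1) := by
    conv_lhs => rw [p.as_sum]
    rw [map_sum, ← sum_add_distrib]
    refine sum_congr rfl fun d _ => ?_
    simp only [monomial_eq_C_mul_zP_pow_mul_wP_pow, map_mul, map_pow, algHom_C, swapVars_zP,
      swapVars_wP]
    ring
  rw [h]
  exact sum_mem fun d hd => mul_mem (Subalgebra.algebraMap_mem _ _)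
    (zP_pow_mul_wP_pow_add_swap_mem_Sinv hN (eps_pow_eq_of_mem_support hp hd))

theorem mem_Sinv_iff (hN : 1 ≤ N) :
    s ∈ Sinv N ↔ s ∈ weightSpace N 1 ∧ swapVars s = s := by
  constructor
  · have hinv {σ : R2 →ₐ[ℂ] R2} (h₁ : σ (zP * wP) = zP * wP)
        (h₂ : σ (zP ^ (2 * N) + wP ^ (2 * N)) = zP ^ (2 * N) + wP ^ (2 * N)) :
        Sinv N ≤ AlgHom.equalizer σ (AlgHom.id ℂ R2) :=
      Algebra.adjoin_le (by rintro _ (rfl | rfl); exacts [h₁, h₂])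
    have hu : eps N ^ (2 * N) = 1 := (isPrimitiveRoot_eps hN).pow_eq_one
    have huu : (C (eps N) * C (eps N)⁻¹ : R2) = 1 := by
      rw [← C_mul, mul_inv_cancel₀ (eps_ne_zero N), C_1]
    refine fun hs => ⟨?_, hinv ?_ ?_ hs⟩
    · rw [mem_weightSpace, C_1, one_mul]
      refine hinv (σ := rotVars (eps N)) ?_ ?_ hs
      · rw [map_mul, rotVars_zP, rotVars_wP]
        linear_combination zP * wP * huu
      · rw [map_add, map_pow, map_pow, rotVars_zP, rotVars_wP, mul_pow, mul_pow, ← C_pow, ← C_pow,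
          inv_pow, hu, inv_one, C_1, one_mul, one_mul]
    · rw [map_mul, swapVars_zP, swapVars_wP, mul_comm]
    · rw [map_add, map_pow, map_pow, swapVars_zP, swapVars_wP, add_comm]
  · rintro ⟨hrot, hswap⟩
    have h := Subalgebra.smul_mem _ (add_swapVars_mem_Sinv hN hrot) (2⁻¹ : ℂ)
    rwa [hswap, ← two_smul ℂ s, smul_smul, inv_mul_cancel₀ two_ne_zero, one_smul] at h

end Weights

section Determinants

variable {N m n i M k j : ℕ} {μ u s : ℂ} {f g p d : R2}

/-- The determinant of the matrix with rows `(f, swapVars f)` and `(g, swapVars g)`. -/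
def reflDet (f g : R2) : R2 := f * swapVars g - g * swapVars f

/-- The product `P ^ (2m+1) Q ^ (2n+1)` of the powers of the mirrors, where `P` and `Q` are the
products of the mirrors of the two orbits; it divides `reflDet f g` for all quasi-invariants
`f` and `g` of the same weight. -/
def discriminant (N m n : ℕ) : R2 :=
  mirrorProduct N (-1) ^ (2 * n + 1) * mirrorProduct N 1 ^ (2 * m + 1)

theorem isRelPrime_zP_wP : IsRelPrime zP wP :=
  X_prime.irreducible.isRelPrime_iff_not_dvd.mpr fun h => absurd (X_dvd_X.mp h) (by decide)

theorem isRelPrime_sub_C_mul {σ K : Type*} [Field K] {x y : MvPolynomial σ K}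
    (h : IsRelPrime x y) {a b : K} (hab : a ≠ b) :
    IsRelPrime (x - C a * y) (x - C b * y) := by
  have hunit : IsUnit (C (a - b) : MvPolynomial σ K) := isUnit_C (sub_ne_zero.mpr hab)
  refine fun e ha hb => h ?_ ?_
  · have hx : C a * (x - C b * y) - C b * (x - C a * y) = C (a - b) * x := by rw [C_sub]; ring
    exact hunit.dvd_mul_left.mp (hx ▸ dvd_sub (hb.mul_left _) (ha.mul_left _))
  · have hy : (x - C b * y) - (x - C a * y) = C (a - b) * y := by rw [C_sub]; ring
    exact hunit.dvd_mul_left.mp (hy ▸ dvd_sub hb ha)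

theorem mirrorProduct_ne_zero (hN : 1 ≤ N) (s : ℂ) : mirrorProduct N s ≠ 0 := fun h => by
  simpa [h] using evalOneZero_mirrorProduct hN s

theorem discriminant_ne_zero (hN : 1 ≤ N) (m n : ℕ) : discriminant N m n ≠ 0 :=
  mul_ne_zero (pow_ne_zero _ (mirrorProduct_ne_zero hN _))
    (pow_ne_zero _ (mirrorProduct_ne_zero hN _))

theorem mirrorProduct_pow_dvd (hN : 1 ≤ N) (hs : s ≠ 0)
    (h : ∀ u, u ^ N = s → mirror u ^ k ∣ d) : mirrorProduct N s ^ k ∣ d := by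
  obtain ⟨v, rfl⟩ := IsAlgClosed.exists_pow_nat_eq s hN
  have hv : v ≠ 0 := (pow_ne_zero_iff (by omega)).mp hs
  have : NeZero N := ⟨by omega⟩
  have hprim : IsPrimitiveRoot (C (Complex.exp (2 * Real.pi * Complex.I / N)) : R2) N :=
    (Complex.isPrimitiveRoot_exp N (by omega)).map_of_injective (C_injective _ _)
  have hroot (ζ) (hζ : ζ ∈ Polynomial.nthRootsFinset N (1 : R2)) :
      ∃ c : ℂ, c ^ N = 1 ∧ C c = ζ := by
    rw [Polynomial.mem_nthRootsFinset hN] at hζ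
    obtain ⟨t, -, rfl⟩ := hprim.eq_pow_of_pow_eq_one hζ
    exact ⟨_, C_injective (Fin 2) ℂ (by rw [C_pow, C_pow, hζ, C_1]), C_pow _ _⟩
  have hmirror (c : ℂ) : zP - C c * (C v * wP) = mirror (c * v) := by rw [mirror, C_mul, mul_assoc]
  rw [mirrorProduct, C_pow, ← mul_pow, hprim.pow_sub_pow_eq_prod_sub_mul _ _ hN, ← prod_pow]
  refine prod_dvd_of_isRelPrime (fun ζ hζ ζ' hζ' hne => ?_) fun ζ hζ => ?_
  · obtain ⟨c, -, rfl⟩ := hroot ζ hζ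
    obtain ⟨c', -, rfl⟩ := hroot ζ' hζ'
    simp only [Function.onFun, hmirror]
    refine (isRelPrime_sub_C_mul isRelPrime_zP_wP fun hcc => hne ?_).pow
    rw [mul_right_cancel₀ hv hcc]
  · obtain ⟨c, hc, rfl⟩ := hroot ζ hζ
    exact hmirror c ▸ h _ (by rw [mul_pow, hc, one_mul])

theorem discriminant_dvd (hN : 1 ≤ N) (h₁ : ∀ u, u ^ N = 1 → mirror u ^ (2 * m + 1) ∣ d)
    (h₂ : ∀ u, u ^ N = -1 → mirror u ^ (2 * n + 1) ∣ d) : discriminant N m n ∣ d := by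
  have hrel : IsRelPrime (mirrorProduct N (-1)) (mirrorProduct N 1) :=
    isRelPrime_sub_C_mul isRelPrime_zP_wP.pow (by norm_num)
  exact hrel.pow.mul_dvd (mirrorProduct_pow_dvd hN (by norm_num) h₂)
    (mirrorProduct_pow_dvd hN one_ne_zero h₁)

theorem mirror_pow_dvd_reflDet (hμ : μ ≠ 0) (hf : f ∈ weightSpace N μ) (hg : g ∈ weightSpace N μ)
    (qf : f ∈ quasiInvariantsAt (eps N ^ j) k) (qg : g ∈ quasiInvariantsAt (eps N ^ j) k) :
    mirror (eps N ^ j) ^ (2 * k + 1) ∣ reflDet f g := by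
  have hrefl {p : R2} (hp : p ∈ weightSpace N μ) :
      reflVars (eps N ^ j) p = C (μ ^ j) * swapVars p := by
    rw [reflVars_apply, rotVars_eps_pow_of_mem_weightSpace hp, map_mul, algHom_C]
  have h : C (μ ^ j) * reflDet f g
      = f * (reflVars (eps N ^ j) g - g) - g * (reflVars (eps N ^ j) f - f) := by
    rw [hrefl hf, hrefl hg, reflDet]
    ring
  refine (isUnit_C (pow_ne_zero j hμ)).dvd_mul_left.mp (h ▸ ?_)
  exact dvd_sub (qg.mul_left f) (qf.mul_left g)

theorem discriminant_dvd_reflDet (hN : 1 ≤ N) (hμ : μ ≠ 0) (hf : f ∈ weightSpace N μ)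
    (hg : g ∈ weightSpace N μ) (qf : f ∈ quasiInvariants N m n) (qg : g ∈ quasiInvariants N m n) :
    discriminant N m n ∣ reflDet f g := by
  rw [mem_quasiInvariants] at qf qg
  refine discriminant_dvd hN (fun u hu => ?_) fun u hu => ?_
  · obtain ⟨j, -, rfl⟩ := exists_eps_pow_eq hN (pow_two_mul_eq_one (.inl hu))
    exact mirror_pow_dvd_reflDet hμ hf hg (qf.1 _ hu) (qg.1 _ hu)
  · obtain ⟨j, -, rfl⟩ := exists_eps_pow_eq hN (pow_two_mul_eq_one (.inr hu))
    exact mirror_pow_dvd_reflDet hμ hf hg (qf.2 _ hu) (qg.2 _ hu)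

theorem swapVars_reflDet (f g : R2) : swapVars (reflDet f g) = -reflDet f g := by
  simp only [reflDet, map_sub, map_mul, swapVars_swapVars]
  ring

theorem reflDet_mem_weightSpace (hμ : μ ≠ 0) (hf : f ∈ weightSpace N μ)
    (hg : g ∈ weightSpace N μ) : reflDet f g ∈ weightSpace N 1 := by
  rw [← mul_inv_cancel₀ hμ]
  exact sub_mem (mul_mem_weightSpace hf (swapVars_mem_weightSpace hμ hg))
    (mul_mem_weightSpace hg (swapVars_mem_weightSpace hμ hf))

theorem mem_Sinv_of_mul_eq (hN : 1 ≤ N) {D E s : R2} (hD₀ : D ≠ 0) (hD : D ∈ weightSpace N 1)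
    (hE : E ∈ weightSpace N 1) (hD' : swapVars D = -D) (hE' : swapVars E = -E)
    (h : D * s = E) : s ∈ Sinv N := by
  rw [mem_weightSpace, C_1, one_mul] at hD hE
  refine (mem_Sinv_iff hN).mpr ⟨?_, ?_⟩
  · rw [mem_weightSpace, C_1, one_mul]
    exact mul_left_cancel₀ hD₀ (by rw [← hD, ← map_mul, h, hE, ← h, hD])
  · refine mul_left_cancel₀ hD₀ ?_
    rw [h, ← neg_inj, ← neg_mul, ← hD', ← map_mul, h, hE']

/-- A pair of quasi-invariants of weight `μ ≠ 0` whose determinant is as small as possible. As in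
Saito's criterion for free arrangements, such a pair is a basis of the quasi-invariants of weight
`μ` over the invariants. -/
structure IsSaitoPair (N m n : ℕ) (μ : ℂ) (f g : R2) : Prop where
  weight_ne_zero : μ ≠ 0
  left_mem : f ∈ quasiInvariants N m n
  right_mem : g ∈ quasiInvariants N m n
  left_mem_weightSpace : f ∈ weightSpace N μ
  right_mem_weightSpace : g ∈ weightSpace N μ
  reflDet_dvd : reflDet f g ∣ discriminant N m n

namespace IsSaitoPair

theorem reflDet_ne_zero (hN : 1 ≤ N) (h : IsSaitoPair N m n μ f g) : reflDet f g ≠ 0 :=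
  ne_zero_of_dvd_ne_zero (discriminant_ne_zero hN m n) h.reflDet_dvd

-- Cramer's rule: the coefficients are `reflDet p g / reflDet f g` and `reflDet f p / reflDet f g`.
theorem exists_eq_add (hN : 1 ≤ N) (h : IsSaitoPair N m n μ f g) (qp : p ∈ quasiInvariants N m n)
    (hp : p ∈ weightSpace N μ) : ∃ s ∈ Sinv N, ∃ t ∈ Sinv N, s * f + t * g = p := by
  have hD := h.reflDet_ne_zero hN
  obtain ⟨hμ, qf, qg, hf, hg, hdvd⟩ := h
  obtain ⟨s, hs⟩ := hdvd.trans (discriminant_dvd_reflDet hN hμ hp hg qp qg)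
  obtain ⟨t, ht⟩ := hdvd.trans (discriminant_dvd_reflDet hN hμ hf hp qf qp)
  have hweight := reflDet_mem_weightSpace hμ hf hg
  refine ⟨s, ?_, t, ?_, mul_left_cancel₀ hD ?_⟩
  · exact mem_Sinv_of_mul_eq hN hD hweight (reflDet_mem_weightSpace hμ hp hg)
      (swapVars_reflDet f g) (swapVars_reflDet p g) hs.symm
  · exact mem_Sinv_of_mul_eq hN hD hweight (reflDet_mem_weightSpace hμ hf hp)
      (swapVars_reflDet f g) (swapVars_reflDet f p) ht.symm
  · calc reflDet f g * (s * f + t * g) = reflDet p g * f + reflDet f p * g := by rw [hs, ht]; ring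
      _ = reflDet f g * p := by simp only [reflDet]; ring

theorem eq_zero_of_add_eq_zero (hN : 1 ≤ N) (h : IsSaitoPair N m n μ f g) {s t : R2}
    (hs : s ∈ Sinv N) (ht : t ∈ Sinv N) (hst : s * f + t * g = 0) : s = 0 ∧ t = 0 := by
  have hswap : s * swapVars f + t * swapVars g = 0 := by
    simpa [((mem_Sinv_iff hN).mp hs).2, ((mem_Sinv_iff hN).mp ht).2] using congrArg swapVars hst
  have hs0 : reflDet f g * s = 0 := by
    rw [reflDet]; linear_combination swapVars g * hst - g * hswap
  have ht0 : reflDet f g * t = 0 := by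
    rw [reflDet]; linear_combination f * hswap - swapVars f * hst
  have hD := h.reflDet_ne_zero hN
  exact ⟨(mul_eq_zero_iff_left hD).mp hs0, (mul_eq_zero_iff_left hD).mp ht0⟩

end IsSaitoPair

theorem mirrorProduct_pow_mem_quasiInvariantsAt_self (hs : s ^ 2 = 1) (hu : u ^ N = s) (k : ℕ) :
    mirrorProduct N s ^ (2 * k + 1) ∈ quasiInvariantsAt u k := by
  have hrefl : reflVars u (mirrorProduct N s) = -mirrorProduct N s := by
    rw [reflVars_mirrorProduct hs (hu ▸ hs), hu, ← pow_two, hs, C_neg, C_1, neg_one_mul]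
  rw [mem_quasiInvariantsAt, map_pow, hrefl, Odd.neg_pow ⟨k, rfl⟩, ← hu]
  have hdvd := pow_dvd_pow_of_dvd (mirror_dvd_mirrorProduct u N) (2 * k + 1)
  exact dvd_sub (dvd_neg.mpr hdvd) hdvd

theorem mirrorProduct_pow_mem_quasiInvariantsAt_of_ne (hs : s ^ 2 = 1) (hu : u ^ N = -s)
    (j k : ℕ) : mirrorProduct N s ^ j ∈ quasiInvariantsAt u k := by
  refine pow_mem (mem_quasiInvariantsAt_of_reflVars_eq ?_) j
  rw [reflVars_mirrorProduct hs (by rw [hu, neg_sq, hs]), hu, mul_neg, neg_neg, ← pow_two, hs, C_1,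
    one_mul]

theorem mirrorProduct_one_pow_mem_quasiInvariants (N m n : ℕ) :
    mirrorProduct N 1 ^ (2 * m + 1) ∈ quasiInvariants N m n :=
  mem_quasiInvariants.mpr
    ⟨fun _ hu => mirrorProduct_pow_mem_quasiInvariantsAt_self (one_pow 2) hu m,
      fun _ hu => mirrorProduct_pow_mem_quasiInvariantsAt_of_ne (one_pow 2) hu _ n⟩

theorem mirrorProduct_neg_one_pow_mem_quasiInvariants (N m n : ℕ) :
    mirrorProduct N (-1) ^ (2 * n + 1) ∈ quasiInvariants N m n :=
  mem_quasiInvariants.mpr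
    ⟨fun _ hu => mirrorProduct_pow_mem_quasiInvariantsAt_of_ne neg_one_sq (by rw [hu, neg_neg]) _ m,
      fun _ hu => mirrorProduct_pow_mem_quasiInvariantsAt_self neg_one_sq hu n⟩

theorem swapVars_mirrorProduct_one (N : ℕ) : swapVars (mirrorProduct N 1) = -mirrorProduct N 1 := by
  simp [mirrorProduct_one]

theorem swapVars_mirrorProduct_neg_one (N : ℕ) :
    swapVars (mirrorProduct N (-1)) = mirrorProduct N (-1) := by
  simp [mirrorProduct_neg_one, add_comm]

theorem dvd_discriminant_of_eq_neg_two_mul (h : f = C (-2) * discriminant N m n) :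
    f ∣ discriminant N m n :=
  h ▸ (isUnit_C (by norm_num)).mul_left_dvd.mpr dvd_rfl

theorem isSaitoPair_one_discriminant (hN : 1 ≤ N) (m n : ℕ) :
    IsSaitoPair N m n 1 1 (discriminant N m n) where
  weight_ne_zero := one_ne_zero
  left_mem := one_mem _
  right_mem := mul_mem (mirrorProduct_neg_one_pow_mem_quasiInvariants N m n)
    (mirrorProduct_one_pow_mem_quasiInvariants N m n)
  left_mem_weightSpace := one_mem_weightSpace N
  right_mem_weightSpace := by
    have h := mul_mem_weightSpace
      (pow_mem_weightSpace (mirrorProduct_mem_weightSpace hN (-1)) (2 * n + 1))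
      (pow_mem_weightSpace (mirrorProduct_mem_weightSpace hN 1) (2 * m + 1))
    rwa [Odd.neg_one_pow ⟨n, rfl⟩, Odd.neg_one_pow ⟨m, rfl⟩, neg_one_mul, neg_neg] at h
  reflDet_dvd := by
    refine dvd_discriminant_of_eq_neg_two_mul ?_
    rw [reflDet, discriminant, map_one, map_mul, map_pow, map_pow, swapVars_mirrorProduct_one,
      swapVars_mirrorProduct_neg_one, Odd.neg_pow ⟨m, rfl⟩, C_neg, map_ofNat]
    ring

theorem isSaitoPair_mirrorProduct_pow (hN : 1 ≤ N) (m n : ℕ) :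
    IsSaitoPair N m n (-1) (mirrorProduct N (-1) ^ (2 * n + 1))
      (mirrorProduct N 1 ^ (2 * m + 1)) where
  weight_ne_zero := neg_ne_zero.mpr one_ne_zero
  left_mem := mirrorProduct_neg_one_pow_mem_quasiInvariants N m n
  right_mem := mirrorProduct_one_pow_mem_quasiInvariants N m n
  left_mem_weightSpace := by
    have h := pow_mem_weightSpace (mirrorProduct_mem_weightSpace hN (-1)) (2 * n + 1)
    rwa [Odd.neg_one_pow ⟨n, rfl⟩] at h
  right_mem_weightSpace := by
    have h := pow_mem_weightSpace (mirrorProduct_mem_weightSpace hN 1) (2 * m + 1)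
    rwa [Odd.neg_one_pow ⟨m, rfl⟩] at h
  reflDet_dvd := by
    refine dvd_discriminant_of_eq_neg_two_mul ?_
    rw [reflDet, discriminant, map_pow, map_pow, swapVars_mirrorProduct_one,
      swapVars_mirrorProduct_neg_one, Odd.neg_pow ⟨m, rfl⟩, C_neg, map_ofNat]
    ring

theorem dvd_of_isHomogeneous_of_dvd {σ K : Type*} [Field K] {f g : MvPolynomial σ K}
    (hf : f.IsHomogeneous k) (hg : g.IsHomogeneous k) (hg₀ : g ≠ 0) (h : f ∣ g) : g ∣ f := by
  obtain ⟨r, rfl⟩ := h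
  obtain ⟨hf₀, hr₀⟩ := mul_ne_zero_iff.mp hg₀
  have hdeg := totalDegree_mul_of_isDomain hf₀ hr₀
  rw [hg.totalDegree hg₀, hf.totalDegree hf₀, left_eq_add, totalDegree_eq_zero_iff_eq_C] at hdeg
  rw [hdeg] at hr₀ ⊢
  exact (isUnit_C (C_ne_zero.mp hr₀)).dvd_mul_right.mp dvd_rfl

theorem isHomogeneous_swapVars (hp : p.IsHomogeneous k) : (swapVars p).IsHomogeneous k :=
  hp.rename_isHomogeneous

theorem isHomogeneous_starVars (hp : p.IsHomogeneous k) : (starVars p).IsHomogeneous k :=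
  isHomogeneous_swapVars (hp.map _)

theorem isHomogeneous_reflDet (hf : f.IsHomogeneous j) (hg : g.IsHomogeneous k) :
    (reflDet f g).IsHomogeneous (j + k) :=
  (hf.mul (isHomogeneous_swapVars hg)).sub (add_comm k j ▸ hg.mul (isHomogeneous_swapVars hf))

theorem reflDet_starVars_ne_zero (hi : i ≠ 0) (hf : f ∈ forms N i M) (hf₁ : evalOneZero f ≠ 0)
    (hg₁ : evalOneZero g ≠ 0) : reflDet f (starVars g) ≠ 0 := by
  intro h
  have heval := congrArg evalOneZero h
  rw [reflDet, map_sub, map_mul, map_mul, evalOneZero_swapVars_starVars,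
    evalOneZero_swapVars_eq_zero hi hf, mul_zero, sub_zero, map_zero] at heval
  exact mul_ne_zero hf₁ ((map_ne_zero _).mpr hg₁) heval

theorem isHomogeneous_discriminant (N m n : ℕ) :
    (discriminant N m n).IsHomogeneous (N * (2 * n + 1) + N * (2 * m + 1)) := by
  have h (s : ℂ) : (mirrorProduct N s).IsHomogeneous N := by
    simpa using isHomogeneous_of_mem_forms (mirrorProduct_mem_forms N s)
  exact ((h _).pow _).mul ((h _).pow _)

theorem isSaitoPair_starVars (hN : 1 ≤ N) (hi : i ≠ 0) (hi' : i < 2 * N)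
    (hf : f ∈ forms N i (m + n)) (hf₁ : evalOneZero f ≠ 0) (qf : f ∈ quasiInvariants N m n)
    (hg : g ∈ forms N (2 * N - i) (m + n)) (hg₁ : evalOneZero g ≠ 0)
    (qg : g ∈ quasiInvariants N m n) :
    IsSaitoPair N m n (eps N ^ ((m + n) * N + i)) f (starVars g) := by
  obtain ⟨j, hij⟩ : ∃ j, i + j = 2 * N := ⟨2 * N - i, by omega⟩
  rw [← hij, Nat.add_sub_cancel_left] at hg
  have hμ : eps N ^ ((m + n) * N + i) ≠ 0 := pow_ne_zero _ (eps_ne_zero N)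
  have hfw : f ∈ weightSpace N (eps N ^ ((m + n) * N + i)) := forms_le_weightSpace hN _ _ hf
  have hgw : starVars g ∈ weightSpace N (eps N ^ ((m + n) * N + i)) := by
    have h : eps N ^ ((m + n) * N + i) * eps N ^ ((m + n) * N + j) = 1 := by
      have hexp : (m + n) * N + i + ((m + n) * N + j) = 2 * N * (m + n + 1) := by
        linear_combination hij
      rw [← pow_add, hexp, pow_mul, (isPrimitiveRoot_eps hN).pow_eq_one, one_pow]
    have hconj := starVars_mem_weightSpace hN (forms_le_weightSpace hN _ _ hg)
    rwa [map_pow, starRingEnd_eps hN, inv_pow, inv_eq_of_mul_eq_one_left h] at hconj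
  have qg' : starVars g ∈ quasiInvariants N m n := starVars_mem_quasiInvariants hN qg
  refine ⟨hμ, qf, qg', hfw, hgw, dvd_of_isHomogeneous_of_dvd (isHomogeneous_discriminant N m n) ?_
    (reflDet_starVars_ne_zero hi hf hf₁ hg₁) (discriminant_dvd_reflDet hN hμ hfw hgw qf qg')⟩
  have hdeg : N * (2 * n + 1) + N * (2 * m + 1) = (m + n) * N + i + ((m + n) * N + j) := by
    linear_combination -hij
  exact hdeg ▸ isHomogeneous_reflDet (isHomogeneous_of_mem_forms hf)
    (isHomogeneous_starVars (isHomogeneous_of_mem_forms hg))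

end Determinants

section Basis

variable {N m n i : ℕ} {p : R2}

theorem exists_sum_saitoPair_eq (hN : 1 ≤ N) {μ : ℕ → ℂ} {f g : ℕ → R2}
    (hμ : Set.InjOn μ (range (2 * N))) (hroot : ∀ i ∈ range (2 * N), μ i ^ (2 * N) = 1)
    (hfg : ∀ i ∈ range (2 * N), IsSaitoPair N m n (μ i) (f i) (g i))
    (hp : p ∈ quasiInvariants N m n) :
    ∃ s t : ℕ → R2, (∀ i ∈ range (2 * N), s i ∈ Sinv N ∧ t i ∈ Sinv N) ∧
      ∑ i ∈ range (2 * N), (s i * f i + t i * g i) = p := by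
  have hstable : (quasiInvariants N m n).toSubmodule ≤
      (quasiInvariants N m n).toSubmodule.comap (rotVars (eps N)).toLinearMap := fun _ hq =>
    rotVars_mem_quasiInvariants hN (isPrimitiveRoot_eps hN).pow_eq_one hq
  obtain ⟨y, hy, rfl⟩ := exists_sum_mem_eigenspace_eq hμ (nonempty_range_iff.mpr (by omega))
    (aeval_rotVars_nodal hN hμ hroot) hstable hp
  choose! s hs t ht hst using fun i (hi : i ∈ range (2 * N)) =>
    (hfg i hi).exists_eq_add hN (hy i hi).1 (hy i hi).2
  exact ⟨s, t, fun i hi => ⟨hs i hi, ht i hi⟩, sum_congr rfl hst⟩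

theorem coeff_eq_of_sum_saitoPair_eq (hN : 1 ≤ N) {μ : ℕ → ℂ} {f g s t s' t' : ℕ → R2}
    (hμ : Set.InjOn μ (range (2 * N)))
    (hfg : ∀ i ∈ range (2 * N), IsSaitoPair N m n (μ i) (f i) (g i))
    (hs : ∀ i ∈ range (2 * N), s i ∈ Sinv N ∧ t i ∈ Sinv N)
    (hs' : ∀ i ∈ range (2 * N), s' i ∈ Sinv N ∧ t' i ∈ Sinv N)
    (h : ∑ i ∈ range (2 * N), (s i * f i + t i * g i)
      = ∑ i ∈ range (2 * N), (s' i * f i + t' i * g i)) :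
    ∀ i ∈ range (2 * N), s i = s' i ∧ t i = t' i := by
  have hweight {σ x : R2} {ν : ℂ} (hσ : σ ∈ Sinv N) (hx : x ∈ weightSpace N ν) :
      σ * x ∈ weightSpace N ν :=
    one_mul ν ▸ mul_mem_weightSpace ((mem_Sinv_iff hN).mp hσ).1 hx
  have hs_sub (i) (hi : i ∈ range (2 * N)) := sub_mem (hs i hi).1 (hs' i hi).1
  have ht_sub (i) (hi : i ∈ range (2 * N)) := sub_mem (hs i hi).2 (hs' i hi).2
  have hzero := eq_zero_of_sum_mem_eigenspace_eq_zero
    (x := fun i => (s i - s' i) * f i + (t i - t' i) * g i) hμ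
    (fun i hi => add_mem (hweight (hs_sub i hi) (hfg i hi).left_mem_weightSpace)
      (hweight (ht_sub i hi) (hfg i hi).right_mem_weightSpace))
    (by
      rw [← sub_eq_zero.mpr h, ← sum_sub_distrib]
      exact sum_congr rfl fun i _ => by ring)
  intro i hi
  have := (hfg i hi).eq_zero_of_add_eq_zero hN (hs_sub i hi) (ht_sub i hi) (hzero i hi)
  exact this.imp sub_eq_zero.mp sub_eq_zero.mp

theorem mem_idxSet : i ∈ idxSet N ↔ i < 2 * N ∧ 1 ≤ i ∧ i ≠ N := by
  rw [idxSet, mem_filter, mem_range]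

theorem two_mul_sub_mem_idxSet (hi : i ∈ idxSet N) : 2 * N - i ∈ idxSet N := by
  rw [mem_idxSet] at *
  omega

theorem two_mul_sub_two_mul_sub (hi : i ∈ idxSet N) : 2 * N - (2 * N - i) = i := by
  rw [mem_idxSet] at hi
  omega

theorem sum_idxSet_reflect {A : Type*} [AddCommMonoid A] (F : ℕ → A) :
    ∑ i ∈ idxSet N, F (2 * N - i) = ∑ i ∈ idxSet N, F i :=
  sum_nbij' (2 * N - ·) (2 * N - ·) (fun _ => two_mul_sub_mem_idxSet)
    (fun _ => two_mul_sub_mem_idxSet) (fun _ => two_mul_sub_two_mul_sub)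
    (fun _ => two_mul_sub_two_mul_sub) fun _ _ => rfl

theorem not_dvd_of_mem_idxSet (hi : i ∈ idxSet N) : ¬N ∣ i := by
  rintro ⟨k, rfl⟩
  obtain ⟨hlt, hpos, hne⟩ := mem_idxSet.mp hi
  have hk : k < 2 := by nlinarith
  interval_cases k <;> omega

theorem range_two_mul_eq_insert (hN : 1 ≤ N) : range (2 * N) = insert 0 (insert N (idxSet N)) := by
  ext i
  rw [mem_insert, mem_insert, mem_idxSet, mem_range]
  omega

theorem forall_mem_range_two_mul (hN : 1 ≤ N) {P : ℕ → Prop} :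
    (∀ i ∈ range (2 * N), P i) ↔ P 0 ∧ P N ∧ ∀ i ∈ idxSet N, P i := by
  simp only [range_two_mul_eq_insert hN, forall_mem_insert]

theorem sum_range_two_mul (hN : 1 ≤ N) {A : Type*} [AddCommMonoid A] (F : ℕ → A) :
    ∑ i ∈ range (2 * N), F i = F 0 + (F N + ∑ i ∈ idxSet N, F i) := by
  rw [range_two_mul_eq_insert hN, sum_insert (by simp [mem_idxSet]; omega),
    sum_insert (by simp [mem_idxSet])]

/-- The family with value `x₀` at `0`, `x₁` at `N` and `x i` at every other index `i`. -/
def indexCases {A : Type*} (N : ℕ) (x₀ x₁ : A) (x : ℕ → A) (i : ℕ) : A :=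
  if i = 0 then x₀ else if i = N then x₁ else x i

section IndexCases

variable {A : Type*} {x₀ x₁ : A} {x : ℕ → A}

@[simp] theorem indexCases_zero : indexCases N x₀ x₁ x 0 = x₀ := if_pos rfl

theorem indexCases_self (hN : 1 ≤ N) : indexCases N x₀ x₁ x N = x₁ := by
  rw [indexCases, if_neg (by omega), if_pos rfl]

theorem indexCases_of_mem (hi : i ∈ idxSet N) : indexCases N x₀ x₁ x i = x i := by
  rw [mem_idxSet] at hi
  rw [indexCases, if_neg (by omega), if_neg hi.2.2]

theorem injOn_indexCases (hN : 1 ≤ N) (h₀₁ : x₀ ≠ x₁) (h₀ : ∀ i ∈ idxSet N, x i ≠ x₀)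
    (h₁ : ∀ i ∈ idxSet N, x i ≠ x₁) (hx : Set.InjOn x (idxSet N)) :
    Set.InjOn (indexCases N x₀ x₁ x) (range (2 * N)) := by
  have hx' : Set.InjOn (indexCases N x₀ x₁ x) (idxSet N) :=
    hx.congr fun i hi => (indexCases_of_mem hi).symm
  rw [range_two_mul_eq_insert hN, coe_insert, coe_insert, Set.injOn_insert, Set.injOn_insert,
    indexCases_zero, indexCases_self hN]
  · refine ⟨⟨hx', ?_⟩, ?_⟩
    · rintro ⟨i, hi, h⟩
      exact h₁ i hi ((indexCases_of_mem hi).symm.trans h)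
    · rintro ⟨i, rfl | hi, h⟩
      · exact h₀₁ (h.symm.trans (indexCases_self hN))
      · exact h₀ i hi ((indexCases_of_mem hi).symm.trans h)
  · simp [mem_idxSet]
  · simp [mem_idxSet, (Nat.one_le_iff_ne_zero.mp hN).symm]

end IndexCases

/-- The weights of the `2N` components, indexed so that `q1i N m n i` has weight
`weights N (m + n) i`. -/
def weights (N M : ℕ) : ℕ → ℂ := indexCases N 1 (-1) fun i => eps N ^ (M * N + i)

/-- The first members of the pairs of generators of the `2N` components. -/
def leftGenerators (N m n : ℕ) (a : ℕ → ℕ → ℂ) : ℕ → R2 :=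
  indexCases N 1 (mirrorProduct N (-1) ^ (2 * n + 1)) fun i => q1i N m n i (a i)

/-- The second members of the pairs of generators of the `2N` components. The generator `q2i` of
index `2N - i` has the weight of the generator `q1i` of index `i`. -/
def rightGenerators (N m n : ℕ) (a : ℕ → ℕ → ℂ) : ℕ → R2 :=
  indexCases N (discriminant N m n) (mirrorProduct N 1 ^ (2 * m + 1))
    fun i => q2i N m n (2 * N - i) (a (2 * N - i))

theorem injOn_weights (hN : 1 ≤ N) (M : ℕ) : Set.InjOn (weights N M) (range (2 * N)) := by
  have hsq (i) (hi : i ∈ idxSet N) : (eps N ^ (M * N + i)) ^ 2 ≠ 1 := by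
    rw [← pow_mul, Ne, (isPrimitiveRoot_eps hN).pow_eq_one_iff_dvd, mul_comm 2 N,
      Nat.mul_dvd_mul_iff_right two_pos, Nat.dvd_add_right (dvd_mul_left N M)]
    exact not_dvd_of_mem_idxSet hi
  refine injOn_indexCases hN (by norm_num) (fun i hi h => hsq i hi (by rw [h, one_pow]))
    (fun i hi h => hsq i hi (by rw [h, neg_one_sq])) fun i hi j hj hij => ?_
  simp only [pow_add] at hij
  exact (isPrimitiveRoot_eps hN).pow_inj (mem_idxSet.mp hi).1 (mem_idxSet.mp hj).1
    (mul_left_cancel₀ (pow_ne_zero _ (eps_ne_zero N)) hij)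

theorem weights_pow_two_mul (hN : 1 ≤ N) (M : ℕ) :
    ∀ i ∈ range (2 * N), weights N M i ^ (2 * N) = 1 := by
  rw [forall_mem_range_two_mul hN, weights, indexCases_zero, indexCases_self hN]
  refine ⟨one_pow _, by rw [pow_mul, neg_one_sq, one_pow], fun i hi => ?_⟩
  rw [indexCases_of_mem hi, pow_right_comm, (isPrimitiveRoot_eps hN).pow_eq_one, one_pow]

theorem exists_q1i_mem_quasiInvariants (hN : 1 ≤ N) (m n : ℕ) (hi : i ∈ idxSet N) :
    ∃ a : ℕ → ℂ, a 0 = 1 ∧ q1i N m n i a ∈ quasiInvariants N m n := by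
  obtain ⟨f, hf, qf, hf₁⟩ :=
    exists_quasiInvariant_form_evalOneZero_ne_zero hN (not_dvd_of_mem_idxSet hi) m n
  obtain ⟨a, ha⟩ := exists_q1i_eq (C_mul_mem_forms (evalOneZero f)⁻¹ hf)
  refine ⟨a, ?_, ha ▸ mul_mem (Subalgebra.algebraMap_mem _ _) qf⟩
  rw [← evalOneZero_q1i hN m n i a, ha, map_mul, evalOneZero_C, inv_mul_cancel₀ hf₁]

theorem isSaitoPair_generators (hN : 1 ≤ N) {a : ℕ → ℕ → ℂ}
    (ha : ∀ i ∈ idxSet N, a i 0 = 1 ∧ q1i N m n i (a i) ∈ quasiInvariants N m n) :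
    ∀ i ∈ range (2 * N), IsSaitoPair N m n (weights N (m + n) i) (leftGenerators N m n a i)
      (rightGenerators N m n a i) := by
  have heval (i) (hi : i ∈ idxSet N) : evalOneZero (q1i N m n i (a i)) ≠ 0 := by
    rw [evalOneZero_q1i hN, (ha i hi).1]
    exact one_ne_zero
  rw [forall_mem_range_two_mul hN]
  simp only [weights, leftGenerators, rightGenerators, indexCases_zero, indexCases_self hN]
  refine ⟨isSaitoPair_one_discriminant hN m n, isSaitoPair_mirrorProduct_pow hN m n,
    fun i hi => ?_⟩
  obtain ⟨hlt, hpos, -⟩ := mem_idxSet.mp hi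
  have hi' := two_mul_sub_mem_idxSet hi
  rw [indexCases_of_mem hi, indexCases_of_mem hi, indexCases_of_mem hi, ← starVars_q1i]
  exact isSaitoPair_starVars hN (by omega) hlt (q1i_mem_forms _ _ _ _ _) (heval i hi) (ha i hi).2
    (q1i_mem_forms _ _ _ _ _) (heval _ hi') (ha _ hi').2

/-- Systems of coefficients with respect to the generators `1`, `Q ^ (2n+1)`, `P ^ (2m+1)`,
`P ^ (2m+1) Q ^ (2n+1)`, `q1i` and `q2i`, in this order. -/
abbrev Coefficients : Type := (R2 × R2 × R2 × R2) × (ℕ → R2) × (ℕ → R2)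

namespace Coefficients

/-- The systems of invariant coefficients which vanish outside the index set. -/
def IsAdmissible (N : ℕ) (c : Coefficients) : Prop :=
  c.1.1 ∈ Sinv N ∧ c.1.2.1 ∈ Sinv N ∧ c.1.2.2.1 ∈ Sinv N ∧ c.1.2.2.2 ∈ Sinv N ∧
    (∀ i ∈ idxSet N, c.2.1 i ∈ Sinv N ∧ c.2.2 i ∈ Sinv N) ∧
    (∀ i ∉ idxSet N, c.2.1 i = 0 ∧ c.2.2 i = 0)

/-- The linear combination of the generators with the given coefficients. -/
def combination (N m n : ℕ) (a : ℕ → ℕ → ℂ) (c : Coefficients) : R2 :=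
  c.1.1 * 1
    + c.1.2.1 * (zP ^ N + wP ^ N) ^ (2 * n + 1)
    + c.1.2.2.1 * (zP ^ N - wP ^ N) ^ (2 * m + 1)
    + c.1.2.2.2 * ((zP ^ N + wP ^ N) ^ (2 * n + 1) * (zP ^ N - wP ^ N) ^ (2 * m + 1))
    + ∑ i ∈ idxSet N, (c.2.1 i * q1i N m n i (a i) + c.2.2 i * q2i N m n i (a i))

/-- The coefficients of the `leftGenerators`. -/
def left (N : ℕ) (c : Coefficients) : ℕ → R2 := indexCases N c.1.1 c.1.2.1 c.2.1

/-- The coefficients of the `rightGenerators`. -/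
def right (N : ℕ) (c : Coefficients) : ℕ → R2 :=
  indexCases N c.1.2.2.2 c.1.2.2.1 fun i => c.2.2 (2 * N - i)

variable {a : ℕ → ℕ → ℂ} {c d : Coefficients}

theorem combination_eq_sum (hN : 1 ≤ N) (m n : ℕ) (a : ℕ → ℕ → ℂ) (c : Coefficients) :
    combination N m n a c = ∑ i ∈ range (2 * N),
      (left N c i * leftGenerators N m n a i + right N c i * rightGenerators N m n a i) := by
  have hidx : ∑ i ∈ idxSet N,
      (left N c i * leftGenerators N m n a i + right N c i * rightGenerators N m n a i)
        = ∑ i ∈ idxSet N, (c.2.1 i * q1i N m n i (a i) + c.2.2 i * q2i N m n i (a i)) := by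
    rw [sum_add_distrib, sum_add_distrib,
      ← sum_idxSet_reflect fun i => c.2.2 i * q2i N m n i (a i)]
    congr 1 <;> refine sum_congr rfl fun i hi => ?_
    · rw [left, leftGenerators, indexCases_of_mem hi, indexCases_of_mem hi]
    · rw [right, rightGenerators, indexCases_of_mem hi, indexCases_of_mem hi]
  rw [sum_range_two_mul hN, hidx]
  simp only [left, right, leftGenerators, rightGenerators, indexCases_zero, indexCases_self hN]
  rw [combination, discriminant, mirrorProduct_one, mirrorProduct_neg_one]
  ring

theorem IsAdmissible.left_right_mem (hN : 1 ≤ N) (hc : IsAdmissible N c) :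
    ∀ i ∈ range (2 * N), left N c i ∈ Sinv N ∧ right N c i ∈ Sinv N := by
  obtain ⟨h₀, h₁, h₂, h₃, hidx, -⟩ := hc
  rw [forall_mem_range_two_mul hN]
  simp only [left, right, indexCases_zero, indexCases_self hN]
  refine ⟨⟨h₀, h₃⟩, ⟨h₁, h₂⟩, fun i hi => ?_⟩
  rw [indexCases_of_mem hi, indexCases_of_mem hi]
  exact ⟨(hidx i hi).1, (hidx _ (two_mul_sub_mem_idxSet hi)).2⟩

theorem IsAdmissible.ext (hN : 1 ≤ N) (hc : IsAdmissible N c) (hd : IsAdmissible N d)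
    (h : ∀ i ∈ range (2 * N), left N c i = left N d i ∧ right N c i = right N d i) : c = d := by
  obtain ⟨-, -, -, -, -, hc⟩ := hc
  obtain ⟨-, -, -, -, -, hd⟩ := hd
  rw [forall_mem_range_two_mul hN] at h
  simp only [left, right, indexCases_zero, indexCases_self hN] at h
  obtain ⟨⟨h₀, h₃⟩, ⟨h₁, h₂⟩, hidx⟩ := h
  have hleft : c.2.1 = d.2.1 := by
    funext i
    by_cases hi : i ∈ idxSet N
    · simpa only [indexCases_of_mem hi] using (hidx i hi).1
    · rw [(hc i hi).1, (hd i hi).1]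
  have hright : c.2.2 = d.2.2 := by
    funext i
    by_cases hi : i ∈ idxSet N
    · have hi' := two_mul_sub_mem_idxSet hi
      simpa only [indexCases_of_mem hi', two_mul_sub_two_mul_sub hi] using (hidx _ hi').2
    · rw [(hc i hi).2, (hd i hi).2]
  ext1
  · ext1; exacts [h₀, Prod.ext h₁ (Prod.ext h₂ h₃)]
  · ext1; exacts [hleft, hright]

theorem exists_isAdmissible_left_right_eq (hN : 1 ≤ N) {s t : ℕ → R2}
    (hst : ∀ i ∈ range (2 * N), s i ∈ Sinv N ∧ t i ∈ Sinv N) :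
    ∃ c, IsAdmissible N c ∧ ∀ i ∈ range (2 * N), left N c i = s i ∧ right N c i = t i := by
  rw [forall_mem_range_two_mul hN] at hst
  obtain ⟨⟨hs₀, ht₀⟩, ⟨hs₁, ht₁⟩, hidx⟩ := hst
  refine ⟨((s 0, s N, t N, t 0), fun i => if i ∈ idxSet N then s i else 0,
    fun i => if i ∈ idxSet N then t (2 * N - i) else 0),
    ⟨hs₀, hs₁, ht₁, ht₀, fun i hi => ?_, fun i hi => ⟨if_neg hi, if_neg hi⟩⟩, ?_⟩
  · simpa only [if_pos hi] using ⟨(hidx i hi).1, (hidx _ (two_mul_sub_mem_idxSet hi)).2⟩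
  · rw [forall_mem_range_two_mul hN]
    simp only [left, right, indexCases_zero, indexCases_self hN, true_and, and_self]
    intro i hi
    rw [indexCases_of_mem hi, indexCases_of_mem hi, if_pos hi, if_pos (two_mul_sub_mem_idxSet hi),
      two_mul_sub_two_mul_sub hi]
    exact ⟨rfl, rfl⟩

theorem existsUnique_isAdmissible_and_eq_combination (hN : 1 ≤ N)
    (ha : ∀ i ∈ idxSet N, a i 0 = 1 ∧ q1i N m n i (a i) ∈ quasiInvariants N m n)
    (hp : p ∈ quasiInvariants N m n) :
    ∃! c, IsAdmissible N c ∧ p = combination N m n a c := by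
  have hpairs := isSaitoPair_generators hN ha
  have hinj := injOn_weights hN (m + n)
  obtain ⟨s, t, hst, hsum⟩ :=
    exists_sum_saitoPair_eq hN hinj (weights_pow_two_mul hN (m + n)) hpairs hp
  obtain ⟨c, hc, hcst⟩ := exists_isAdmissible_left_right_eq hN hst
  have hcp : p = combination N m n a c := by
    rw [combination_eq_sum hN, ← hsum]
    exact sum_congr rfl fun i hi => by rw [(hcst i hi).1, (hcst i hi).2]
  refine ⟨c, ⟨hc, hcp⟩, fun d ⟨hd, hdp⟩ => hd.ext hN hc ?_⟩
  refine coeff_eq_of_sum_saitoPair_eq hN hinj hpairs (hd.left_right_mem hN)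
    (hc.left_right_mem hN) ?_
  rw [← combination_eq_sum hN, ← combination_eq_sum hN, ← hdp, hcp]

end Coefficients

end Basis

theorem free_basis_of_quasiInvariants_general (N m n : ℕ) (hN : 1 ≤ N) :
    ∃ a : ℕ → ℕ → ℂ,
      (∀ i ∈ idxSet N, a i 0 = 1 ∧
        IsQuasiInv N m n (q1i N m n i (a i)) ∧ IsQuasiInv N m n (q2i N m n i (a i))) ∧
      ∀ p : R2, IsQuasiInv N m n p →
        ∃! c : (R2 × R2 × R2 × R2) × (ℕ → R2) × (ℕ → R2),
          c.1.1 ∈ Sinv N ∧ c.1.2.1 ∈ Sinv N ∧ c.1.2.2.1 ∈ Sinv N ∧ c.1.2.2.2 ∈ Sinv N ∧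
          (∀ i ∈ idxSet N, c.2.1 i ∈ Sinv N ∧ c.2.2 i ∈ Sinv N) ∧
          (∀ i ∉ idxSet N, c.2.1 i = 0 ∧ c.2.2 i = 0) ∧
          p = c.1.1 * 1
              + c.1.2.1 * (zP ^ N + wP ^ N) ^ (2 * n + 1)
              + c.1.2.2.1 * (zP ^ N - wP ^ N) ^ (2 * m + 1)
              + c.1.2.2.2 * ((zP ^ N + wP ^ N) ^ (2 * n + 1) * (zP ^ N - wP ^ N) ^ (2 * m + 1))
              + ∑ i ∈ idxSet N,
                  (c.2.1 i * q1i N m n i (a i) + c.2.2 i * q2i N m n i (a i)) := by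
  choose! a ha using fun i (hi : i ∈ idxSet N) => exists_q1i_mem_quasiInvariants hN m n hi
  refine ⟨a, fun i hi => ⟨(ha i hi).1, (isQuasiInv_iff hN).mpr (ha i hi).2,
    (isQuasiInv_iff hN).mpr ?_⟩, fun p hp => ?_⟩
  · rw [← starVars_q1i]
    exact starVars_mem_quasiInvariants hN (ha i hi).2
  · simpa only [Coefficients.IsAdmissible, Coefficients.combination, and_assoc] using
      Coefficients.existsUnique_isAdmissible_and_eq_combination hN ha ((isQuasiInv_iff hN).mp hp)

theorem free_basis_of_quasiInvariants (N m n : ℕ) (hN : 1 ≤ N) (hmn : n < m) :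
    ∃ a : ℕ → ℕ → ℂ,
      (∀ i ∈ idxSet N, a i 0 = 1 ∧
        IsQuasiInv N m n (q1i N m n i (a i)) ∧ IsQuasiInv N m n (q2i N m n i (a i))) ∧
      ∀ p : R2, IsQuasiInv N m n p →
        ∃! c : (R2 × R2 × R2 × R2) × (ℕ → R2) × (ℕ → R2),
          c.1.1 ∈ Sinv N ∧ c.1.2.1 ∈ Sinv N ∧ c.1.2.2.1 ∈ Sinv N ∧ c.1.2.2.2 ∈ Sinv N ∧
          (∀ i ∈ idxSet N, c.2.1 i ∈ Sinv N ∧ c.2.2 i ∈ Sinv N) ∧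
          (∀ i ∉ idxSet N, c.2.1 i = 0 ∧ c.2.2 i = 0) ∧
          p = c.1.1 * 1
              + c.1.2.1 * (zP ^ N + wP ^ N) ^ (2 * n + 1)
              + c.1.2.2.1 * (zP ^ N - wP ^ N) ^ (2 * m + 1)
              + c.1.2.2.2 * ((zP ^ N + wP ^ N) ^ (2 * n + 1) * (zP ^ N - wP ^ N) ^ (2 * m + 1))
              + ∑ i ∈ idxSet N,
                  (c.2.1 i * q1i N m n i (a i) + c.2.2 i * q2i N m n i (a i)) :=
  free_basis_of_quasiInvariants_general N m n hN
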